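/- arXiv:1908.01265 — 4 statements merged into one kernel-verified Lean document; each statement's English description precedes it below -/
import Mathlib

section
/- Let U ⊆ ℝⁿ be open, let g^{ij} : U → ℝ be smooth functions such that (g^{ij}(x)) is a symmetric invertible matrix for each x, with inverse matrix (g_{ij}(x)). Let σ : U × U → ℝ be a smooth symmetric function (σ(x,x') = σ(x',x)) satisfying the Hamilton–Jacobi equation σ(x,x') = (1/2) Σ_{i,j} g^{ij}(x) σ_{,i}(x,x') σ_{,j}(x,x') on U × U, together with σ(x,x) = 0 and σ_{,i}(x,x) = 0 for all x ∈ U, and assume the diagonal Hessian ([σ_{,ij}](x)) is invertible for every x ∈ U. Then the coincidence limit of the third partial derivatives in the first argument is [σ_{,ijk}](x') = (1/2)( ∂_i g_{jk} + ∂_j g_{ik} + ∂_k g_{ij} )(x') for all x' ∈ U and all indices i, j, k. -/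
/-!
Fix the base point `p` and view `s = σ(·, p)` as a function of one variable with a critical point
at `p`. Write `G = (g^{ij}(p))`, `H = [s_{,ij}](p)` and `T = [s_{,ijk}](p)`. Differentiating the
Hamilton–Jacobi equation `s = ½ g^{ij} s_{,i} s_{,j}` once gives `s_{,k} = s_{,j} Q_k^j` with
`Q_k^j = g^{ji} s_{,ki} + ½ g^{ji}_{,k} s_{,i}`. Since `s_{,j}(p) = 0`, one further derivative gives
`H = H G H`, so `G H = 1` and hence `Q_k^j(p) = δ_k^j`. Two further derivatives give
`T_{lmk} = T_{lmk} + H_{mj} Q_k^j_{,l} + H_{lj} Q_k^j_{,m}`; expanding `Q` and contracting with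
`H G = 1`, this becomes
`0 = 2 T_{lmk} + (H G_{,l} H)_{mk} + (H G_{,m} H)_{lk} + (H G_{,k} H)_{ml}`. The last three terms
are entries of the first derivatives of `-G⁻¹`, the inverse taken pointwise.
-/

open scoped BigOperators
open Set

/-- `∂/∂x^i` in the first argument of a two-point function. -/
noncomputable def d1 (n : ℕ) (i : Fin n) (f : (Fin n → ℝ) → (Fin n → ℝ) → ℝ) :
    (Fin n → ℝ) → (Fin n → ℝ) → ℝ :=
  fun x x' => fderiv ℝ (fun y => f y x') x (Pi.single i 1)

/-- `∂/∂x'^i` in the second argument of a two-point function. -/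
noncomputable def d2 (n : ℕ) (i : Fin n) (f : (Fin n → ℝ) → (Fin n → ℝ) → ℝ) :
    (Fin n → ℝ) → (Fin n → ℝ) → ℝ :=
  fun x x' => fderiv ℝ (fun y => f x y) x' (Pi.single i 1)

/-- The matrix of mixed second derivatives `σ_{,ij'} = ∂²σ/∂x^i∂x'^j` at `(x,x')`. -/
noncomputable def mixedHess (n : ℕ) (σ : (Fin n → ℝ) → (Fin n → ℝ) → ℝ)
    (x x' : Fin n → ℝ) : Matrix (Fin n) (Fin n) ℝ :=
  Matrix.of fun i j => d1 n i (d2 n j σ) x x'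

/-- The pointwise matrix `(g^{ij}(x))` of a metric-coefficient field. -/
noncomputable def gMat (n : ℕ) (g : Fin n → Fin n → (Fin n → ℝ) → ℝ)
    (x : Fin n → ℝ) : Matrix (Fin n) (Fin n) ℝ :=
  Matrix.of fun i j => g i j x

/-- The lowered metric `g_{ij}(x)`, the pointwise inverse of `(g^{ij}(x))`. -/
noncomputable def gLow (n : ℕ) (g : Fin n → Fin n → (Fin n → ℝ) → ℝ)
    (x : Fin n → ℝ) : Matrix (Fin n) (Fin n) ℝ :=
  (gMat n g x)⁻¹

/-- The partial derivative `∂_i f` of a function on `ℝⁿ`. -/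
noncomputable def pd (n : ℕ) (i : Fin n) (f : (Fin n → ℝ) → ℝ) : (Fin n → ℝ) → ℝ :=
  fun y => fderiv ℝ f y (Pi.single i 1)

open Filter Topology
open scoped Matrix

section Calculus

theorem hasFDerivAt_mul_of_eq_zero {𝕜 E : Type*} [NontriviallyNormedField 𝕜]
    [NormedAddCommGroup E] [NormedSpace 𝕜 E] {u v : E → 𝕜} {u' : E →L[𝕜] 𝕜} {x : E}
    (hu : HasFDerivAt u u' x) (hv : ContinuousAt v x) (hux : u x = 0) :
    HasFDerivAt (fun y => u y * v y) (v x • u') x := by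
  rw [hasFDerivAt_iff_isLittleO] at hu ⊢
  have h_remainder : (fun y => (u y - u x - u' (y - x)) * v y) =o[𝓝 x] fun y => y - x := by
    simpa using hu.norm_right.mul_isBigO (hv.isBigO_one ℝ)
  have h_increment : (fun y => u' (y - x) * (v y - v x)) =o[𝓝 x] fun y => y - x := by
    simpa using ((u'.isBigO_sub (𝓝 x) x).norm_right.mul_isLittleO
      ((Asymptotics.isLittleO_one_iff ℝ).2 (tendsto_sub_nhds_zero_iff.2 hv)))
  refine (h_remainder.add h_increment).congr_left fun y => ?_
  simp only [hux, smul_apply, smul_eq_mul]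
  ring

variable {n : ℕ} {f h : (Fin n → ℝ) → ℝ} {x : Fin n → ℝ}

theorem contDiffAt_pd {m k : WithTop ℕ∞} (hf : ContDiffAt ℝ k f x) (hmk : m + 1 ≤ k) (i : Fin n) :
    ContDiffAt ℝ m (pd n i f) x :=
  (hf.fderiv_right hmk).clm_apply contDiffAt_const

theorem pd_congr_of_eventuallyEq (hfh : f =ᶠ[𝓝 x] h) (i : Fin n) :
    pd n i f =ᶠ[𝓝 x] pd n i h :=
  hfh.fderiv.fun_comp (· (Pi.single i 1))

theorem pd_pd_eq_fderiv_fderiv (hf : ContDiffAt ℝ 2 f x) (i j : Fin n) :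
    pd n i (pd n j f) x = fderiv ℝ (fderiv ℝ f) x (Pi.single i 1) (Pi.single j 1) := by
  have hdf : DifferentiableAt ℝ (fderiv ℝ f) x :=
    (hf.fderiv_right (m := 1) one_add_one_eq_two.le).differentiableAt one_ne_zero
  change fderiv ℝ (fun y => fderiv ℝ f y (Pi.single j 1)) x (Pi.single i 1) = _
  simp [fderiv_clm_apply hdf (differentiableAt_const _)]

theorem pd_comm (hf : ContDiffAt ℝ 2 f x) (i j : Fin n) :
    pd n i (pd n j f) x = pd n j (pd n i f) x := by
  rw [pd_pd_eq_fderiv_fderiv hf, pd_pd_eq_fderiv_fderiv hf]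
  exact hf.isSymmSndFDerivAt (by simp) _ _

theorem pd_comm_eventuallyEq (hf : ContDiffAt ℝ 2 f x) (i j : Fin n) :
    pd n i (pd n j f) =ᶠ[𝓝 x] pd n j (pd n i f) :=
  (hf.eventually (by simp)).mono fun _ hy => pd_comm hy i j

theorem pd_add (hf : DifferentiableAt ℝ f x) (hh : DifferentiableAt ℝ h x) (i : Fin n) :
    pd n i (fun y => f y + h y) x = pd n i f x + pd n i h x := by
  simp [pd, fderiv_fun_add hf hh]

theorem pd_const_mul (hf : DifferentiableAt ℝ f x) (c : ℝ) (i : Fin n) :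
    pd n i (fun y => c * f y) x = c * pd n i f x := by
  simp [pd, fderiv_const_mul hf]

variable {ι : Type*} [Fintype ι] {u v : ι → (Fin n → ℝ) → ℝ}

theorem pd_sum_mul (hu : ∀ a, DifferentiableAt ℝ (u a) x) (hv : ∀ a, DifferentiableAt ℝ (v a) x)
    (i : Fin n) :
    pd n i (fun y => ∑ a, u a y * v a y) x =
      ∑ a, pd n i (u a) x * v a x + ∑ a, u a x * pd n i (v a) x := by
  simp [pd, fderiv_fun_sum fun a _ => (hu a).fun_mul (hv a), fderiv_fun_mul (hu _) (hv _),
    Finset.sum_add_distrib, mul_comm, add_comm]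

theorem hasFDerivAt_sum_mul_of_eq_zero (hu : ∀ a, DifferentiableAt ℝ (u a) x)
    (hv : ∀ a, ContinuousAt (v a) x) (hux : ∀ a, u a x = 0) :
    HasFDerivAt (fun y => ∑ a, u a y * v a y) (∑ a, v a x • fderiv ℝ (u a) x) x :=
  HasFDerivAt.fun_sum fun a _ => hasFDerivAt_mul_of_eq_zero (hu a).hasFDerivAt (hv a) (hux a)

theorem pd_sum_mul_of_eq_zero (hu : ∀ a, DifferentiableAt ℝ (u a) x)
    (hv : ∀ a, ContinuousAt (v a) x) (hux : ∀ a, u a x = 0) (i : Fin n) :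
    pd n i (fun y => ∑ a, u a y * v a y) x = ∑ a, pd n i (u a) x * v a x := by
  simp [pd, (hasFDerivAt_sum_mul_of_eq_zero hu hv hux).fderiv, mul_comm]

-- `v` may be merely `C¹`: at a zero of `u`, the product `u * pd n j v` is still differentiable.
theorem pd_pd_sum_mul_of_eq_zero (hu : ∀ a, ContDiffAt ℝ 2 (u a) x)
    (hv : ∀ a, ContDiffAt ℝ 1 (v a) x) (hux : ∀ a, u a x = 0) (i j : Fin n) :
    pd n i (pd n j fun y => ∑ a, u a y * v a y) x =
      ∑ a, pd n i (pd n j (u a)) x * v a x + ∑ a, pd n j (u a) x * pd n i (v a) x +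
        ∑ a, pd n i (u a) x * pd n j (v a) x := by
  have hv_diff : ∀ a, DifferentiableAt ℝ (v a) x := fun a => (hv a).differentiableAt one_ne_zero
  have hu_diff : ∀ a, DifferentiableAt ℝ (u a) x := fun a => (hu a).differentiableAt two_ne_zero
  have hpu_diff : ∀ a, DifferentiableAt ℝ (pd n j (u a)) x := fun a =>
    (contDiffAt_pd (m := 1) (hu a) one_add_one_eq_two.le j).differentiableAt one_ne_zero
  have hpv_cont : ∀ a, ContinuousAt (pd n j (v a)) x := fun a =>
    (contDiffAt_pd (m := 0) (hv a) (zero_add 1).le j).continuousAt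
  have h_inner : (pd n j fun y => ∑ a, u a y * v a y) =ᶠ[𝓝 x]
      fun y => ∑ a, pd n j (u a) y * v a y + ∑ a, u a y * pd n j (v a) y := by
    filter_upwards [eventually_all.2 fun a => (hu a).eventually (by simp),
      eventually_all.2 fun a => (hv a).eventually (by simp)] with y huy hvy
    exact pd_sum_mul (fun a => (huy a).differentiableAt two_ne_zero)
      (fun a => (hvy a).differentiableAt one_ne_zero) j
  rw [(pd_congr_of_eventuallyEq h_inner i).eq_of_nhds,
    pd_add (DifferentiableAt.fun_sum fun a _ => (hpu_diff a).fun_mul (hv_diff a))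
      (hasFDerivAt_sum_mul_of_eq_zero hu_diff hpv_cont hux).differentiableAt,
    pd_sum_mul hpu_diff hv_diff, pd_sum_mul_of_eq_zero hu_diff hpv_cont hux]

end Calculus

section Inverse

open scoped Matrix.Norms.Operator

theorem hasFDerivAt_matrix_inv {𝕜 ι : Type*} [NontriviallyNormedField 𝕜] [CompleteSpace 𝕜]
    [Fintype ι] [DecidableEq ι] {A : Matrix ι ι 𝕜} (hA : IsUnit A) :
    HasFDerivAt (fun B : Matrix ι ι 𝕜 => B⁻¹)
      (-ContinuousLinearMap.mulLeftRight 𝕜 (Matrix ι ι 𝕜) A⁻¹ A⁻¹) A := by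
  -- The uniformity is named because instance search finds the product one on matrices instead.
  have : @CompleteSpace (Matrix ι ι 𝕜) PseudoMetricSpace.toUniformSpace :=
    FiniteDimensional.complete 𝕜 (Matrix ι ι 𝕜)
  obtain ⟨A, rfl⟩ := hA
  simpa only [Matrix.nonsing_inv_eq_ringInverse, Ring.inverse_unit] using
    hasFDerivAt_ringInverse (𝕜 := 𝕜) A

variable {n : ℕ} {g : Fin n → Fin n → (Fin n → ℝ) → ℝ} {x : Fin n → ℝ}

theorem gLow_comm_eventuallyEq (hgsymm : ∀ i j, g i j =ᶠ[𝓝 x] g j i) (l m : Fin n) :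
    (fun y => gLow n g y l m) =ᶠ[𝓝 x] fun y => gLow n g y m l := by
  filter_upwards [eventually_all.2 fun i => eventually_all.2 (hgsymm i)] with y hy
  have hG : (gMat n g y).IsSymm := Matrix.IsSymm.ext fun i j => hy j i
  exact hG.inv.apply m l

theorem pd_gLow (hg : ∀ i j, DifferentiableAt ℝ (g i j) x) (hx : IsUnit (gMat n g x))
    (k l m : Fin n) :
    pd n k (fun y => gLow n g y l m) x =
      -(gLow n g x * gMat n (fun i j => pd n k (g i j)) x * gLow n g x) l m := by
  -- The topology of the operator norm is the product topology, so `hasFDerivAt_pi` applies.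
  have hG : HasFDerivAt (gMat n g)
      (ContinuousLinearMap.pi fun i => ContinuousLinearMap.pi fun j => fderiv ℝ (g i j) x) x :=
    hasFDerivAt_pi.2 fun i => hasFDerivAt_pi.2 fun j => (hg i j).hasFDerivAt
  have hL := (hasFDerivAt_matrix_inv (𝕜 := ℝ) hx).comp x hG
  have hLlm := hasFDerivAt_pi'.1 (hasFDerivAt_pi'.1 hL l) m
  exact congrArg (· (Pi.single k 1)) hLlm.fderiv

end Inverse

section Hamiltonian

variable {n : ℕ} {g : Fin n → Fin n → (Fin n → ℝ) → ℝ} {s : (Fin n → ℝ) → ℝ} {p : Fin n → ℝ}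

/-- The Hessian matrix `(s_{,ij}(x))` of a function on `ℝⁿ`. -/
noncomputable def hess (s : (Fin n → ℝ) → ℝ) (x : Fin n → ℝ) : Matrix (Fin n) (Fin n) ℝ :=
  Matrix.of fun i j => pd n i (pd n j s) x

/-- The kinetic Hamiltonian `½ g^{ij} s_{,i} s_{,j}` of the differential of `s`: the
Hamilton–Jacobi equation says that it equals `s`. -/
noncomputable def hamiltonian (g : Fin n → Fin n → (Fin n → ℝ) → ℝ) (s : (Fin n → ℝ) → ℝ) :
    (Fin n → ℝ) → ℝ :=
  fun x => (1 / 2) * ∑ i, ∑ j, g i j x * pd n i s x * pd n j s x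

/-- The factor `Q_k^j = g^{ji} s_{,ki} + ½ g^{ji}_{,k} s_{,i}` in the factorization
`s_{,j} Q_k^j` of the `k`-th partial derivative of the Hamiltonian. -/
noncomputable def hamiltonianCoeff (g : Fin n → Fin n → (Fin n → ℝ) → ℝ)
    (s : (Fin n → ℝ) → ℝ) (k j : Fin n) : (Fin n → ℝ) → ℝ :=
  fun x => ∑ i, g j i x * pd n k (pd n i s) x + (1 / 2) * ∑ i, pd n i s x * pd n k (g j i) x

theorem pd_hamiltonian (hg : ∀ i j, DifferentiableAt ℝ (g i j) p)
    (hgsymm : ∀ i j, g i j p = g j i p) (hs : ∀ i, DifferentiableAt ℝ (pd n i s) p) (k : Fin n) :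
    pd n k (hamiltonian g s) p = ∑ j, pd n j s p * hamiltonianCoeff g s k j p := by
  have h_raised : ∀ i, DifferentiableAt ℝ (fun y => ∑ j, g i j y * pd n j s y) p := fun i =>
    DifferentiableAt.fun_sum fun j _ => (hg i j).fun_mul (hs j)
  have h_factored : hamiltonian g s =
      fun y => (1 / 2) * ∑ i, pd n i s y * ∑ j, g i j y * pd n j s y := by
    funext y
    simp only [hamiltonian, Finset.mul_sum]
    exact Finset.sum_congr rfl fun i _ => Finset.sum_congr rfl fun j _ => by ring
  have h_swap : ∑ i, pd n k (pd n i s) p * ∑ j, g i j p * pd n j s p =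
      ∑ j, pd n j s p * ∑ i, g j i p * pd n k (pd n i s) p := by
    simp only [Finset.mul_sum]
    rw [Finset.sum_comm]
    exact Finset.sum_congr rfl fun j _ => Finset.sum_congr rfl fun i _ => by
      rw [hgsymm i j]; ring
  rw [h_factored, pd_const_mul (DifferentiableAt.fun_sum fun i _ => (hs i).fun_mul (h_raised i)),
    pd_sum_mul hs h_raised, h_swap]
  simp only [pd_sum_mul (hg _) hs, hamiltonianCoeff, mul_add, Finset.sum_add_distrib,
    mul_comm (pd n k (g _ _) p), mul_left_comm _ (1 / 2 : ℝ), ← Finset.mul_sum]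
  ring

theorem pd_hamiltonian_eventuallyEq (hg : ∀ i j, ContDiffAt ℝ 1 (g i j) p)
    (hgsymm : ∀ i j, g i j =ᶠ[𝓝 p] g j i) (hs : ContDiffAt ℝ 2 s p) (k : Fin n) :
    pd n k (hamiltonian g s) =ᶠ[𝓝 p] fun y => ∑ j, pd n j s y * hamiltonianCoeff g s k j y := by
  filter_upwards [eventually_all.2 fun i => eventually_all.2 fun j => (hg i j).eventually (by simp),
    eventually_all.2 fun i => eventually_all.2 (hgsymm i), hs.eventually (by simp)]
    with y hgy hgsymmy hsy
  exact pd_hamiltonian (fun i j => (hgy i j).differentiableAt one_ne_zero) hgsymmy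
    (fun i => (contDiffAt_pd (m := 1) hsy one_add_one_eq_two.le i).differentiableAt one_ne_zero) k

theorem contDiffAt_hamiltonianCoeff {m : WithTop ℕ∞} (hg : ∀ i j, ContDiffAt ℝ (m + 1) (g i j) p)
    (hs : ContDiffAt ℝ (m + 1 + 1) s p) (k j : Fin n) :
    ContDiffAt ℝ m (hamiltonianCoeff g s k j) p := by
  have hds : ∀ i, ContDiffAt ℝ (m + 1) (pd n i s) p := contDiffAt_pd hs le_rfl
  exact (ContDiffAt.sum fun i _ => ((hg j i).of_le le_self_add).mul
      (contDiffAt_pd (hds i) le_rfl k)).add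
    (contDiffAt_const.mul (ContDiffAt.sum fun i _ => ((hds i).of_le le_self_add).mul
      (contDiffAt_pd (hg j i) le_rfl k)))

theorem hamiltonianCoeff_of_pd_eq_zero (hs : ContDiffAt ℝ 2 s p) (hcrit : ∀ i, pd n i s p = 0)
    (k j : Fin n) : hamiltonianCoeff g s k j p = (gMat n g p * hess s p) j k := by
  simp [hamiltonianCoeff, hcrit, Matrix.mul_apply, gMat, hess, pd_comm hs k]

theorem pd_hamiltonianCoeff_of_pd_eq_zero (hg : ∀ i j, ContDiffAt ℝ 1 (g i j) p)
    (hs : ContDiffAt ℝ 3 s p) (hcrit : ∀ i, pd n i s p = 0) (k j l : Fin n) :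
    pd n l (hamiltonianCoeff g s k j) p =
      ∑ i, pd n l (g j i) p * pd n k (pd n i s) p +
        ∑ i, g j i p * pd n l (pd n k (pd n i s)) p +
        (1 / 2) * ∑ i, pd n l (pd n i s) p * pd n k (g j i) p := by
  have hg_diff : ∀ i, DifferentiableAt ℝ (g j i) p := fun i => (hg j i).differentiableAt one_ne_zero
  have hdg_cont : ∀ i, ContinuousAt (pd n k (g j i)) p := fun i =>
    (contDiffAt_pd (m := 0) (hg j i) (zero_add 1).le k).continuousAt
  have hds : ∀ i, ContDiffAt ℝ 2 (pd n i s) p := contDiffAt_pd hs two_add_one_eq_three.le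
  have hds_diff : ∀ i, DifferentiableAt ℝ (pd n i s) p := fun i =>
    (hds i).differentiableAt two_ne_zero
  have hdds_diff : ∀ i, DifferentiableAt ℝ (pd n k (pd n i s)) p := fun i =>
    (contDiffAt_pd (m := 1) (hds i) one_add_one_eq_two.le k).differentiableAt one_ne_zero
  have h_half := (hasFDerivAt_sum_mul_of_eq_zero hds_diff hdg_cont hcrit).differentiableAt
  unfold hamiltonianCoeff
  rw [pd_add (DifferentiableAt.fun_sum fun i _ => (hg_diff i).fun_mul (hdds_diff i))
      (h_half.const_mul _), pd_const_mul h_half, pd_sum_mul hg_diff hdds_diff,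
    pd_sum_mul_of_eq_zero hds_diff hdg_cont hcrit]

theorem hess_hamiltonian_of_pd_eq_zero (hg : ∀ i j, ContDiffAt ℝ 1 (g i j) p)
    (hgsymm : ∀ i j, g i j =ᶠ[𝓝 p] g j i) (hs : ContDiffAt ℝ 2 s p)
    (hcrit : ∀ i, pd n i s p = 0) :
    hess (hamiltonian g s) p = hess s p * (gMat n g p * hess s p) := by
  have hds_diff : ∀ j, DifferentiableAt ℝ (pd n j s) p := fun j =>
    (contDiffAt_pd (m := 1) hs one_add_one_eq_two.le j).differentiableAt one_ne_zero
  have hcoeff_cont : ∀ k j, ContinuousAt (hamiltonianCoeff g s k j) p := fun k j =>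
    (contDiffAt_hamiltonianCoeff (m := 0) (by simpa using hg)
      (by simpa [one_add_one_eq_two] using hs) k j).continuousAt
  ext l k
  change pd n l (pd n k (hamiltonian g s)) p = _
  rw [(pd_congr_of_eventuallyEq (pd_hamiltonian_eventuallyEq hg hgsymm hs k) l).eq_of_nhds,
    pd_sum_mul_of_eq_zero hds_diff (hcoeff_cont k) hcrit]
  simp only [hamiltonianCoeff_of_pd_eq_zero hs hcrit]
  rfl

theorem sum_hess_mul_pd_hamiltonianCoeff (hg : ∀ i j, ContDiffAt ℝ 1 (g i j) p)
    (hs : ContDiffAt ℝ 3 s p) (hcrit : ∀ i, pd n i s p = 0)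
    (hinv : hess s p * gMat n g p = 1) (k l m : Fin n) :
    ∑ j, pd n m (pd n j s) p * pd n l (hamiltonianCoeff g s k j) p =
      (hess s p * gMat n (fun i j => pd n l (g i j)) p * hess s p) m k +
        pd n l (pd n m (pd n k s)) p +
        (1 / 2) * (hess s p * gMat n (fun i j => pd n k (g i j)) p * hess s p) m l := by
  have hs2 : ContDiffAt ℝ 2 s p := hs.of_le (by norm_num)
  have hcoeff : (fun j => pd n l (hamiltonianCoeff g s k j) p) =
      gMat n (fun i j => pd n l (g i j)) p *ᵥ (hess s p).col k +
        gMat n g p *ᵥ (fun i => pd n l (pd n k (pd n i s)) p) +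
        (1 / 2 : ℝ) • (gMat n (fun i j => pd n k (g i j)) p *ᵥ (hess s p).col l) := by
    funext j
    rw [pd_hamiltonianCoeff_of_pd_eq_zero hg hs hcrit]
    simp only [pd_comm hs2 k, pd_comm hs2 l, mul_comm (pd n _ (pd n l s) p)]
    rfl
  have hthird : pd n l (pd n k (pd n m s)) p = pd n l (pd n m (pd n k s)) p :=
    (pd_congr_of_eventuallyEq (pd_comm_eventuallyEq hs2 k m) l).eq_of_nhds
  have hcontract := congrFun (congrArg (hess s p *ᵥ ·) hcoeff) m
  simp only [Matrix.mulVec_add, Matrix.mulVec_smul, Matrix.mulVec_mulVec, hinv, Matrix.one_mulVec]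
    at hcontract
  rw [← hthird]
  exact hcontract

theorem pd_pd_pd_hamiltonian_of_gMat_mul_hess_eq_one (hg : ∀ i j, ContDiffAt ℝ 2 (g i j) p)
    (hgsymm : ∀ i j, g i j =ᶠ[𝓝 p] g j i) (hs : ContDiffAt ℝ 3 s p)
    (hcrit : ∀ i, pd n i s p = 0) (hinv : gMat n g p * hess s p = 1) (k l m : Fin n) :
    pd n l (pd n m (pd n k (hamiltonian g s))) p =
      pd n l (pd n m (pd n k s)) p +
        ∑ j, pd n m (pd n j s) p * pd n l (hamiltonianCoeff g s k j) p +
        ∑ j, pd n l (pd n j s) p * pd n m (hamiltonianCoeff g s k j) p := by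
  have hs2 : ContDiffAt ℝ 2 s p := hs.of_le (by norm_num)
  have hfactor := pd_hamiltonian_eventuallyEq (fun i j => (hg i j).of_le one_le_two) hgsymm hs2 k
  have hcoeff_smooth : ∀ j, ContDiffAt ℝ 1 (hamiltonianCoeff g s k j) p :=
    contDiffAt_hamiltonianCoeff (by simpa [one_add_one_eq_two] using hg)
      (by simpa [one_add_one_eq_two, two_add_one_eq_three] using hs) k
  rw [(pd_congr_of_eventuallyEq (pd_congr_of_eventuallyEq hfactor m) l).eq_of_nhds,
    pd_pd_sum_mul_of_eq_zero (contDiffAt_pd hs two_add_one_eq_three.le) hcoeff_smooth hcrit]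
  simp [hamiltonianCoeff_of_pd_eq_zero hs2 hcrit, hinv, Matrix.one_apply]

theorem gMat_mul_hess_eq_one (hg : ∀ i j, ContDiffAt ℝ 1 (g i j) p)
    (hgsymm : ∀ i j, g i j =ᶠ[𝓝 p] g j i) (hs : ContDiffAt ℝ 2 s p)
    (hHJ : s =ᶠ[𝓝 p] hamiltonian g s) (hcrit : ∀ i, pd n i s p = 0)
    (hhess : IsUnit (hess s p)) : gMat n g p * hess s p = 1 := by
  have hess_eq : hess s p = hess (hamiltonian g s) p := Matrix.ext fun l k =>
    (pd_congr_of_eventuallyEq (pd_congr_of_eventuallyEq hHJ k) l).eq_of_nhds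
  refine hhess.mul_left_cancel ?_
  rw [← hess_hamiltonian_of_pd_eq_zero hg hgsymm hs hcrit, ← hess_eq, mul_one]

theorem ruseSynge_third_coincidence_general (hg : ∀ i j, ContDiffAt ℝ 2 (g i j) p)
    (hgsymm : ∀ i j, g i j =ᶠ[𝓝 p] g j i) (hs : ContDiffAt ℝ 3 s p)
    (hHJ : s =ᶠ[𝓝 p] hamiltonian g s) (hcrit : ∀ i, pd n i s p = 0)
    (hhess : IsUnit (hess s p)) (i j k : Fin n) :
    pd n i (pd n j (pd n k s)) p =
      (1 / 2) * (pd n i (fun y => gLow n g y j k) p + pd n j (fun y => gLow n g y i k) p +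
        pd n k (fun y => gLow n g y i j) p) := by
  have hg1 : ∀ i j, ContDiffAt ℝ 1 (g i j) p := fun i j => (hg i j).of_le one_le_two
  have hs2 : ContDiffAt ℝ 2 s p := hs.of_le (by norm_num)
  have hGH : gMat n g p * hess s p = 1 := gMat_mul_hess_eq_one hg1 hgsymm hs2 hHJ hcrit hhess
  have hHG : hess s p * gMat n g p = 1 := mul_eq_one_comm.1 hGH
  have hlow : gLow n g p = hess s p := Matrix.inv_eq_right_inv hGH
  have hdlow : ∀ a b c, pd n a (fun y => gLow n g y b c) p =
      -(hess s p * gMat n (fun i j => pd n a (g i j)) p * hess s p) b c := fun a b c => by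
    rw [pd_gLow (fun i j => (hg1 i j).differentiableAt one_ne_zero) (.of_mul_eq_one _ hGH), hlow]
  have hdlow_symm : pd n k (fun y => gLow n g y j i) p = pd n k (fun y => gLow n g y i j) p :=
    (pd_congr_of_eventuallyEq (gLow_comm_eventuallyEq hgsymm j i) k).eq_of_nhds
  have hthird := pd_pd_pd_hamiltonian_of_gMat_mul_hess_eq_one hg hgsymm hs hcrit hGH k i j
  rw [← (pd_congr_of_eventuallyEq (pd_congr_of_eventuallyEq
      (pd_congr_of_eventuallyEq hHJ k) j) i).eq_of_nhds,
    sum_hess_mul_pd_hamiltonianCoeff hg1 hs hcrit hHG,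
    sum_hess_mul_pd_hamiltonianCoeff hg1 hs hcrit hHG,
    pd_comm (contDiffAt_pd hs two_add_one_eq_three.le k) j i] at hthird
  linarith [hdlow i j k, hdlow j i k, hdlow k i j, hdlow k j i]

end Hamiltonian

/-- Coincidence limit of the third partial derivatives of the Ruse–Synge function in the
first argument: `[σ_{,ijk}](x') = ½ (∂_i g_{jk} + ∂_j g_{ik} + ∂_k g_{ij})(x')`. -/
theorem ruseSynge_third_coincidence (n : ℕ) (hn : 1 ≤ n)
    (U : Set (Fin n → ℝ)) (hU : IsOpen U)
    (g : Fin n → Fin n → (Fin n → ℝ) → ℝ)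
    (hgsmooth : ∀ i j, ContDiffOn ℝ (⊤ : ℕ∞) (g i j) U)
    (hgsymm : ∀ i j, ∀ x ∈ U, g i j x = g j i x)
    (hginv : ∀ x ∈ U, IsUnit (gMat n g x).det)
    (σ : (Fin n → ℝ) → (Fin n → ℝ) → ℝ)
    (hσ : ContDiffOn ℝ (⊤ : ℕ∞) (fun p : (Fin n → ℝ) × (Fin n → ℝ) => σ p.1 p.2) (U ×ˢ U))
    (hσsymm : ∀ x ∈ U, ∀ x' ∈ U, σ x x' = σ x' x)
    (hHJ : ∀ x ∈ U, ∀ x' ∈ U,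
      σ x x' = (1 / 2) * ∑ i, ∑ j, g i j x * d1 n i σ x x' * d1 n j σ x x')
    (hdiag0 : ∀ x ∈ U, σ x x = 0)
    (hdiag1 : ∀ x ∈ U, ∀ i : Fin n, d1 n i σ x x = 0)
    (hhess : ∀ x ∈ U, IsUnit (Matrix.of fun i j => d1 n i (d1 n j σ) x x :
      Matrix (Fin n) (Fin n) ℝ).det)
    (x' : Fin n → ℝ) (hx' : x' ∈ U) :
    ∀ i j k : Fin n,
      d1 n i (d1 n j (d1 n k σ)) x' x' =
        (1 / 2) * (pd n i (fun y => gLow n g y j k) x' +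
          pd n j (fun y => gLow n g y i k) x' +
          pd n k (fun y => gLow n g y i j) x') := by
  intro i j k
  have hnhds : U ∈ 𝓝 x' := hU.mem_nhds hx'
  have hs : ContDiffOn ℝ (⊤ : ℕ∞) (fun y => σ y x') U :=
    hσ.comp (f := fun y => (y, x')) (by fun_prop) fun y hy => ⟨hy, hx'⟩
  exact ruseSynge_third_coincidence_general
    (fun i j => ((hgsmooth i j).contDiffAt hnhds).of_le (WithTop.coe_le_coe.2 le_top))
    (fun i j => eventuallyEq_of_mem hnhds (hgsymm i j))
    ((hs.contDiffAt hnhds).of_le (WithTop.coe_le_coe.2 le_top))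
    (eventuallyEq_of_mem hnhds fun y hy => hHJ y hy x' hx') (hdiag1 x' hx')
    ((Matrix.isUnit_iff_isUnit_det _).2 (hhess x' hx')) i j k
end

section
/- Let ν, ρ : ℕ → ℝ be sequences such that Σ_k (1 + ν_k²) exp(−τ ν_k²) < ∞ and Σ_j (1 + ρ_j²) exp(−τ ρ_j²) < ∞ for every τ > 0, and let a : ℕ × ℕ → ℂ satisfy Σ_j |a_{kj}|² = 1 for every k and Σ_k |a_{kj}|² = 1 for every j. For t, s > 0 define Y(t,s) := Σ_{k,j} |a_{kj}|² ν_k ρ_j exp(−t ν_k² − s ρ_j²). Then all these sums converge absolutely and the relative spectral invariant Φ(t,s) := Σ_{k,j} |a_{kj}|² ( ν_k e^{−t ν_k²} − ρ_j e^{−t ρ_j²} )( ν_k e^{−s ν_k²} − ρ_j e^{−s ρ_j²} ) converges absolutely and satisfies Φ(t,s) = Σ_k ν_k² e^{−(t+s) ν_k²} + Σ_j ρ_j² e^{−(t+s) ρ_j²} − Y(t,s) − Y(s,t). -/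
open scoped BigOperators

/-!
In the two eigenbases, `D₊ e^{-tD₊²}` and `D₋ e^{-tD₋²}` are multiplication by square-summable
sequences `x`, `y`, and Parseval makes `w k j = |a_{kj}|²` doubly stochastic.
Expanding `w k j (x k - y j) (x' k - y' j)`, the diagonal products `w k j x k x' k` and
`w k j y j y' j` lose their weight when summed over the free index; the mixed products are
dominated, by `2|xy| ≤ x² + y²`, by diagonal ones.
-/

/-- A nonnegative kernel with all row sums equal to `1`. The squared overlaps `‖a k j‖ ^ 2` of two
orthonormal bases have this property in both orders of the indices. Mathlib's
`Matrix.rowStochastic` covers finite square matrices only. -/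
structure IsRowStochastic {ι κ : Type*} (w : ι → κ → ℝ) : Prop where
  nonneg : ∀ i j, 0 ≤ w i j
  hasSum_row : ∀ i, HasSum (w i) 1

/-- The function `x ↦ x e^{-tx²}`, whose value at an eigenvalue of a self-adjoint operator `D` is
the corresponding eigenvalue of `D e^{-tD²}`. -/
noncomputable def diracHeat (t x : ℝ) : ℝ := x * Real.exp (-t * x ^ 2)

lemma diracHeat_def (t x : ℝ) : diracHeat t x = x * Real.exp (-t * x ^ 2) := rfl

lemma diracHeat_mul_diracHeat (t s x y : ℝ) :
    diracHeat t x * diracHeat s y = x * y * Real.exp (-t * x ^ 2 - s * y ^ 2) := by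
  rw [diracHeat_def, diracHeat_def, mul_mul_mul_comm, ← Real.exp_add, neg_mul s, ← sub_eq_add_neg]

lemma diracHeat_mul_diracHeat_self (t s x : ℝ) :
    diracHeat t x * diracHeat s x = x ^ 2 * Real.exp (-(t + s) * x ^ 2) := by
  rw [diracHeat_mul_diracHeat, ← sq, ← sub_mul, neg_add']

lemma diracHeat_sq (t x : ℝ) : diracHeat t x ^ 2 = x ^ 2 * Real.exp (-(2 * t) * x ^ 2) := by
  rw [sq, diracHeat_mul_diracHeat_self, two_mul]

lemma summable_sq_mul_exp {ι : Type*} {x : ι → ℝ} {τ : ℝ}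
    (h : Summable fun i => (1 + x i ^ 2) * Real.exp (-τ * x i ^ 2)) :
    Summable fun i => x i ^ 2 * Real.exp (-τ * x i ^ 2) :=
  h.of_nonneg_of_le (fun _ => by positivity) fun _ =>
    mul_le_mul_of_nonneg_right (le_add_of_nonneg_left zero_le_one) (Real.exp_pos _).le

lemma summable_mul_mul_of_summable_mul_sq {ι : Type*} {w x y : ι → ℝ} (hw : ∀ i, 0 ≤ w i)
    (hx : Summable fun i => w i * x i ^ 2) (hy : Summable fun i => w i * y i ^ 2) :
    Summable fun i => w i * (x i * y i) := by
  refine .of_norm_bounded (hx.add hy) fun i => ?_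
  have abs_mul_le : |x i * y i| ≤ x i ^ 2 + y i ^ 2 := by
    rw [abs_mul, ← sq_abs (x i), ← sq_abs (y i)]
    nlinarith [two_mul_le_add_sq |x i| |y i|, abs_nonneg (x i), abs_nonneg (y i)]
  calc ‖w i * (x i * y i)‖ = w i * |x i * y i| := by
        rw [Real.norm_eq_abs, abs_mul, abs_of_nonneg (hw i)]
    _ ≤ w i * (x i ^ 2 + y i ^ 2) := mul_le_mul_of_nonneg_left abs_mul_le (hw i)
    _ = w i * x i ^ 2 + w i * y i ^ 2 := mul_add _ _ _

lemma summable_mul_of_summable_sq {ι : Type*} {x y : ι → ℝ}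
    (hx : Summable fun i => x i ^ 2) (hy : Summable fun i => y i ^ 2) :
    Summable fun i => x i * y i := by
  simpa only [one_mul] using summable_mul_mul_of_summable_mul_sq (w := fun _ => 1)
    (fun _ => zero_le_one) (by simpa only [one_mul] using hx) (by simpa only [one_mul] using hy)

namespace IsRowStochastic

variable {ι κ : Type*} {w : ι → κ → ℝ}

lemma hasSum_mul_fst (hw : IsRowStochastic w) {f : ι → ℝ} (hf : Summable f) :
    HasSum (fun p : ι × κ => w p.1 p.2 * f p.1) (∑' i, f i) := by
  have row (c : ℝ) (i : ι) : HasSum (fun j => w i j * c) c := by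
    simpa only [one_mul] using (hw.hasSum_row i).mul_right c
  have summable_abs : Summable fun p : ι × κ => w p.1 p.2 * |f p.1| :=
    (summable_prod_of_nonneg fun p => mul_nonneg (hw.nonneg _ _) (abs_nonneg _)).2
      ⟨fun i => (row |f i| i).summable, by simpa only [(row _ _).tsum_eq] using hf.abs⟩
  have summable : Summable fun p : ι × κ => w p.1 p.2 * f p.1 :=
    summable_abs.of_norm_bounded fun p => by
      rw [Real.norm_eq_abs, abs_mul, abs_of_nonneg (hw.nonneg _ _)]
  have sum_rows := summable.hasSum.prod_fiberwise fun i => row (f i) i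
  exact sum_rows.tsum_eq ▸ summable.hasSum

lemma hasSum_mul_snd (hw : IsRowStochastic fun j i => w i j) {g : κ → ℝ} (hg : Summable g) :
    HasSum (fun p : ι × κ => w p.1 p.2 * g p.2) (∑' j, g j) :=
  (Equiv.prodComm κ ι).hasSum_iff.1 (hw.hasSum_mul_fst hg)

lemma summable_mul_fst_mul_snd (hrow : IsRowStochastic w)
    (hcol : IsRowStochastic fun j i => w i j) {x : ι → ℝ} {y : κ → ℝ}
    (hx : Summable fun i => x i ^ 2) (hy : Summable fun j => y j ^ 2) :
    Summable fun p : ι × κ => w p.1 p.2 * (x p.1 * y p.2) :=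
  summable_mul_mul_of_summable_mul_sq (fun p => hrow.nonneg p.1 p.2)
    (hrow.hasSum_mul_fst hx).summable (hcol.hasSum_mul_snd hy).summable

lemma hasSum_mul_sub_mul_sub (hrow : IsRowStochastic w) (hcol : IsRowStochastic fun j i => w i j)
    {x x' : ι → ℝ} {y y' : κ → ℝ}
    (hx : Summable fun i => x i ^ 2) (hx' : Summable fun i => x' i ^ 2)
    (hy : Summable fun j => y j ^ 2) (hy' : Summable fun j => y' j ^ 2) :
    HasSum (fun p : ι × κ => w p.1 p.2 * (x p.1 - y p.2) * (x' p.1 - y' p.2))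
      ((∑' i, x i * x' i) + (∑' j, y j * y' j) -
        (∑' p : ι × κ, w p.1 p.2 * (x p.1 * y' p.2)) -
        (∑' p : ι × κ, w p.1 p.2 * (x' p.1 * y p.2))) := by
  have diag_fst := hrow.hasSum_mul_fst (summable_mul_of_summable_sq hx hx')
  have diag_snd := hcol.hasSum_mul_snd (summable_mul_of_summable_sq hy hy')
  have mixed := (hrow.summable_mul_fst_mul_snd hcol hx hy').hasSum
  have mixed' := (hrow.summable_mul_fst_mul_snd hcol hx' hy).hasSum
  refine (((diag_fst.add diag_snd).sub mixed).sub mixed').congr_fun fun p => ?_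
  ring

end IsRowStochastic

theorem relative_invariant_Phi_general {ι κ : Type*} {ν : ι → ℝ} {ρ : κ → ℝ} {w : ι → κ → ℝ}
    (hrow : IsRowStochastic w) (hcol : IsRowStochastic fun j k => w k j) {t s : ℝ}
    (hνt : Summable fun k => ν k ^ 2 * Real.exp (-(2 * t) * ν k ^ 2))
    (hνs : Summable fun k => ν k ^ 2 * Real.exp (-(2 * s) * ν k ^ 2))
    (hρt : Summable fun j => ρ j ^ 2 * Real.exp (-(2 * t) * ρ j ^ 2))
    (hρs : Summable fun j => ρ j ^ 2 * Real.exp (-(2 * s) * ρ j ^ 2)) :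
    Summable (fun k : ι => ν k ^ 2 * Real.exp (-(t + s) * ν k ^ 2)) ∧
    Summable (fun j : κ => ρ j ^ 2 * Real.exp (-(t + s) * ρ j ^ 2)) ∧
    Summable (fun p : ι × κ =>
      w p.1 p.2 * ν p.1 * ρ p.2 * Real.exp (-t * ν p.1 ^ 2 - s * ρ p.2 ^ 2)) ∧
    Summable (fun p : ι × κ =>
      w p.1 p.2 * ν p.1 * ρ p.2 * Real.exp (-s * ν p.1 ^ 2 - t * ρ p.2 ^ 2)) ∧
    Summable (fun p : ι × κ =>
      w p.1 p.2 * (ν p.1 * Real.exp (-t * ν p.1 ^ 2) - ρ p.2 * Real.exp (-t * ρ p.2 ^ 2)) *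
        (ν p.1 * Real.exp (-s * ν p.1 ^ 2) - ρ p.2 * Real.exp (-s * ρ p.2 ^ 2))) ∧
    (∑' p : ι × κ,
        w p.1 p.2 *
          (ν p.1 * Real.exp (-t * ν p.1 ^ 2) - ρ p.2 * Real.exp (-t * ρ p.2 ^ 2)) *
          (ν p.1 * Real.exp (-s * ν p.1 ^ 2) - ρ p.2 * Real.exp (-s * ρ p.2 ^ 2))) =
      (∑' k : ι, ν k ^ 2 * Real.exp (-(t + s) * ν k ^ 2)) +
        (∑' j : κ, ρ j ^ 2 * Real.exp (-(t + s) * ρ j ^ 2)) -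
        (∑' p : ι × κ, w p.1 p.2 * ν p.1 * ρ p.2 *
          Real.exp (-t * ν p.1 ^ 2 - s * ρ p.2 ^ 2)) -
        (∑' p : ι × κ, w p.1 p.2 * ν p.1 * ρ p.2 *
          Real.exp (-s * ν p.1 ^ 2 - t * ρ p.2 ^ 2)) := by
  have mixed (t s : ℝ) (p : ι × κ) :
      w p.1 p.2 * ν p.1 * ρ p.2 * Real.exp (-t * ν p.1 ^ 2 - s * ρ p.2 ^ 2) =
        w p.1 p.2 * (diracHeat t (ν p.1) * diracHeat s (ρ p.2)) := by
    rw [diracHeat_mul_diracHeat, mul_assoc (w _ _), mul_assoc (w _ _)]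
  simp only [← diracHeat_sq] at hνt hνs hρt hρs
  simp only [mixed, ← diracHeat_mul_diracHeat_self, ← diracHeat_def]
  have hY := hrow.summable_mul_fst_mul_snd hcol hνt hρs
  have hY' := hrow.summable_mul_fst_mul_snd hcol hνs hρt
  have hΦ := hrow.hasSum_mul_sub_mul_sub hcol hνt hνs hρt hρs
  exact ⟨summable_mul_of_summable_sq hνt hνs, summable_mul_of_summable_sq hρt hρs, hY, hY',
    hΦ.summable, hΦ.tsum_eq⟩

/-- The eigenbasis form of the identity
`Φ(t,s) = −∂_tΘ₊(t+s) − ∂_tΘ₋(t+s) − Y(t,s) − Y(s,t)` for the relative spectral invariant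
of two Dirac-type operators with eigenvalues `ν_k`, `ρ_j` and overlap coefficients
`a_{kj}`, together with the absolute convergence of all the sums involved. -/
theorem relative_invariant_Phi (ν ρ : ℕ → ℝ)
    (hν : ∀ τ : ℝ, 0 < τ → Summable fun k => (1 + ν k ^ 2) * Real.exp (-τ * ν k ^ 2))
    (hρ : ∀ τ : ℝ, 0 < τ → Summable fun j => (1 + ρ j ^ 2) * Real.exp (-τ * ρ j ^ 2))
    (a : ℕ → ℕ → ℂ)
    (ha1 : ∀ k, HasSum (fun j => ‖a k j‖ ^ 2) 1)
    (ha2 : ∀ j, HasSum (fun k => ‖a k j‖ ^ 2) 1)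
    (t s : ℝ) (ht : 0 < t) (hs : 0 < s) :
    Summable (fun k : ℕ => ν k ^ 2 * Real.exp (-(t + s) * ν k ^ 2)) ∧
    Summable (fun j : ℕ => ρ j ^ 2 * Real.exp (-(t + s) * ρ j ^ 2)) ∧
    Summable (fun p : ℕ × ℕ =>
      ‖a p.1 p.2‖ ^ 2 * ν p.1 * ρ p.2 *
        Real.exp (-t * ν p.1 ^ 2 - s * ρ p.2 ^ 2)) ∧
    Summable (fun p : ℕ × ℕ =>
      ‖a p.1 p.2‖ ^ 2 * ν p.1 * ρ p.2 *
        Real.exp (-s * ν p.1 ^ 2 - t * ρ p.2 ^ 2)) ∧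
    Summable (fun p : ℕ × ℕ =>
      ‖a p.1 p.2‖ ^ 2 *
        (ν p.1 * Real.exp (-t * ν p.1 ^ 2) - ρ p.2 * Real.exp (-t * ρ p.2 ^ 2)) *
        (ν p.1 * Real.exp (-s * ν p.1 ^ 2) - ρ p.2 * Real.exp (-s * ρ p.2 ^ 2))) ∧
    (∑' p : ℕ × ℕ,
        ‖a p.1 p.2‖ ^ 2 *
          (ν p.1 * Real.exp (-t * ν p.1 ^ 2) - ρ p.2 * Real.exp (-t * ρ p.2 ^ 2)) *
          (ν p.1 * Real.exp (-s * ν p.1 ^ 2) - ρ p.2 * Real.exp (-s * ρ p.2 ^ 2))) =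
      (∑' k : ℕ, ν k ^ 2 * Real.exp (-(t + s) * ν k ^ 2)) +
        (∑' j : ℕ, ρ j ^ 2 * Real.exp (-(t + s) * ρ j ^ 2)) -
        (∑' p : ℕ × ℕ, ‖a p.1 p.2‖ ^ 2 * ν p.1 * ρ p.2 *
          Real.exp (-t * ν p.1 ^ 2 - s * ρ p.2 ^ 2)) -
        (∑' p : ℕ × ℕ, ‖a p.1 p.2‖ ^ 2 * ν p.1 * ρ p.2 *
          Real.exp (-s * ν p.1 ^ 2 - t * ρ p.2 ^ 2)) :=
  relative_invariant_Phi_general ⟨fun _ _ => sq_nonneg _, ha1⟩ ⟨fun _ _ => sq_nonneg _, ha2⟩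
    (summable_sq_mul_exp (hν _ (by positivity))) (summable_sq_mul_exp (hν _ (by positivity)))
    (summable_sq_mul_exp (hρ _ (by positivity))) (summable_sq_mul_exp (hρ _ (by positivity)))
end

section
/- For every t > 0, the principal value integral of p tan(p/2) e^{−t p²} over ℝ, with singularities at the odd multiples of π, satisfies the identity (1/(2π)) · p.v. ∫_ℝ p tan(p/2) exp(−t p²) dp = (4π)^{−1/2} t^{−3/2} Σ_{k=1}^{∞} (−1)^{k+1} k exp(−k²/(4t)), and the series on the right converges absolutely. -/
open scoped Topology
open MeasureTheory Filter

/-!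
The factor `tan (p/2)` and the truncated domain are invariant under `p ↦ p + 2π`, so the truncated
integral unfolds to one over a single period, in which `f p = p exp (-tp²)` is replaced by its
periodization `∑ f (p + 2πn)`. Poisson summation, in the form of the functional equation of
Mathlib's `oddKernel`, writes the periodization as a sine series `∑ sin (kp) b_k`.

Since `|tan (p/2) sin (kp)| ≤ 2k`, the product of `tan (p/2)` with this series is bounded, although
`tan (p/2)` has a pole at `p = π`. Dominated convergence therefore removes the truncation, and the
integral is computed term by term from `∫₀^{2π} tan (p/2) sin (kp) dp = 2π (-1)^(k+1)`.
-/

namespace TanPrincipalValue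

open Function Real Set

section Unfolding

variable {E : Type*} [NormedAddCommGroup E] [NormedSpace ℝ E] {f : ℝ → E} {g : ℝ → ℝ} {T : ℝ}

lemma hasSum_intervalIntegral_comp_add_zsmul (hf : Integrable f) (hT : 0 < T) (a : ℝ) :
    HasSum (fun n : ℤ => ∫ x in a..a + T, f (x + n • T)) (∫ x, f x) := by
  have hdisj : Pairwise (onFun Disjoint fun n : ℤ => Ioc (a + n • T) (a + (n + 1) • T)) :=
    pairwise_disjoint_Ioc_add_zsmul a T
  have h := hasSum_integral_iUnion (μ := volume) (fun _ => measurableSet_Ioc) hdisj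
    hf.integrableOn
  rw [iUnion_Ioc_add_zsmul hT, setIntegral_univ] at h
  refine h.congr_fun fun n => ?_
  have hle : a + n • T ≤ a + (n + 1) • T := by rw [add_zsmul, one_zsmul]; linarith
  rw [intervalIntegral.integral_comp_add_right, ← intervalIntegral.integral_of_le hle, add_zsmul,
    one_zsmul, add_assoc, add_comm T]

lemma integral_eq_intervalIntegral_tsum (hf : Integrable f) (hT : 0 < T) (a : ℝ) :
    ∫ x, f x = ∫ x in a..a + T, ∑' n : ℤ, f (x + n • T) := by
  have haT : a ≤ a + T := by linarith
  have hsum := hasSum_intervalIntegral_comp_add_zsmul hf hT a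
  have hnorm := (hasSum_intervalIntegral_comp_add_zsmul hf.norm hT a).summable
  simp only [intervalIntegral.integral_of_le haT] at hsum hnorm ⊢
  exact hsum.unique (hasSum_integral_of_summable_integral_norm
    (fun n => (hf.comp_add_right (n • T)).restrict) hnorm)

lemma integral_periodic_smul (hg : Periodic g T) (hgf : Integrable fun x => g x • f x)
    (hT : 0 < T) (a : ℝ) :
    ∫ x, g x • f x = ∫ x in a..a + T, g x • ∑' n : ℤ, f (x + n • T) := by
  simp_rw [integral_eq_intervalIntegral_tsum hgf hT a, hg.zsmul _ _, tsum_const_smul'']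

lemma setIntegral_periodic_smul {S : Set ℝ} (hS : MeasurableSet S) (hST : Periodic (· ∈ S) T)
    (hg : Periodic g T) (hgf : IntegrableOn (fun x => g x • f x) S) (hT : 0 < T) (a : ℝ) :
    ∫ x in S, g x • f x =
      ∫ x in a..a + T, S.indicator (fun x => g x • ∑' n : ℤ, f (x + n • T)) x := by
  have hind : Periodic (S.indicator g) T := fun x => by
    classical simp only [indicator_apply, hg x, hST x]
  rw [← integrable_indicator_iff hS, indicator_smul_left] at hgf
  rw [← integral_indicator hS, indicator_smul_left, integral_periodic_smul hind hgf hT a,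
    indicator_smul_left]

lemma tendsto_setIntegral_periodic_smul {ι : Type*} {l : Filter ι} [l.IsCountablyGenerated]
    {S : ι → Set ℝ} (hS : ∀ i, MeasurableSet (S i)) (hST : ∀ i, Periodic (· ∈ S i) T)
    (hSl : ∀ᵐ x, ∀ᶠ i in l, x ∈ S i) (hg : Periodic g T)
    (hgf : ∀ᶠ i in l, IntegrableOn (fun x => g x • f x) (S i)) (hT : 0 < T) (a : ℝ)
    (hint : IntervalIntegrable (fun x => g x • ∑' n : ℤ, f (x + n • T)) volume a (a + T)) :
    Tendsto (fun i => ∫ x in S i, g x • f x) l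
      (𝓝 (∫ x in a..a + T, g x • ∑' n : ℤ, f (x + n • T))) := by
  have hlim : Tendsto (fun i => ∫ x in a..a + T,
      (S i).indicator (fun x => g x • ∑' n : ℤ, f (x + n • T)) x) l
      (𝓝 (∫ x in a..a + T, g x • ∑' n : ℤ, f (x + n • T))) := by
    refine intervalIntegral.tendsto_integral_filter_of_dominated_convergence _
      (.of_forall fun i => (intervalIntegrable_iff.1 hint).aestronglyMeasurable.indicator (hS i))
      (.of_forall fun i => ae_of_all _ fun x _ => norm_indicator_le_norm_self _ x) hint.norm ?_
    filter_upwards [hSl] with x hx _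
    refine tendsto_const_nhds.congr' ?_
    filter_upwards [hx] with i hi
    rw [indicator_of_mem hi]
  refine hlim.congr' ?_
  filter_upwards [hgf] with i hi
  exact (setIntegral_periodic_smul (hS i) (hST i) hg hi hT a).symm

end Unfolding

lemma periodic_tan_half : Periodic (fun p => tan (p / 2)) (2 * π) := by
  simpa only [mul_comm] using tan_periodic.div_const 2

lemma measurable_tan_half : Measurable fun p : ℝ => tan (p / 2) := by
  simp_rw [tan_eq_sin_div_cos]
  fun_prop

lemma ae_cos_half_ne_zero : ∀ᵐ p : ℝ, cos (p / 2) ≠ 0 := by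
  have hpoles : {p : ℝ | cos (p / 2) = 0} ⊆ range fun m : ℤ => (2 * (m : ℝ) + 1) * π := by
    intro p hp
    obtain ⟨m, hm⟩ := cos_eq_zero_iff.1 hp
    exact ⟨m, by linarith⟩
  simpa [ae_iff] using ((countable_range _).mono hpoles).measure_zero volume

section SineIntegrals

lemma tan_half_mul_sin_add_sin {p : ℝ} (hp : cos (p / 2) ≠ 0) (y : ℝ) :
    tan (p / 2) * (sin (y + p) + sin y) = cos y - cos (y + p) := by
  obtain ⟨x, rfl⟩ : ∃ x, p = 2 * x := ⟨p / 2, by ring⟩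
  rw [mul_div_cancel_left₀ x two_ne_zero] at hp ⊢
  rw [tan_eq_sin_div_cos, sin_add, cos_add, sin_two_mul, cos_two_mul]
  field_simp
  linear_combination (2 * cos y * cos x) * sin_sq_add_cos_sq x

lemma tan_half_mul_sin_succ_mul {p : ℝ} (hp : cos (p / 2) ≠ 0) (n : ℕ) :
    tan (p / 2) * sin ((n + 1) * p) =
      cos (n * p) - cos ((n + 1) * p) - tan (p / 2) * sin (n * p) := by
  have h := tan_half_mul_sin_add_sin hp (n * p)
  rw [← add_one_mul, mul_add] at h
  linarith

lemma abs_tan_half_mul_sin_nat_mul_le (n : ℕ) (p : ℝ) : |tan (p / 2) * sin (n * p)| ≤ 2 * n := by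
  by_cases hp : cos (p / 2) = 0
  · simp [tan_eq_sin_div_cos, hp] -- at a pole, `tan` takes the junk value `0`
  induction n with
  | zero => simp
  | succ n ih =>
    push_cast
    rw [tan_half_mul_sin_succ_mul hp]
    calc |cos (n * p) - cos ((n + 1) * p) - tan (p / 2) * sin (n * p)|
        ≤ |cos (n * p)| + |cos ((n + 1) * p)| + |tan (p / 2) * sin (n * p)| :=
          (abs_sub _ _).trans (add_le_add_left (abs_sub _ _) _)
      _ ≤ 1 + 1 + 2 * n := by gcongr <;> exact abs_cos_le_one _
      _ = 2 * (n + 1) := by ring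

lemma intervalIntegrable_tan_half_mul_sin_nat_mul (n : ℕ) (a b : ℝ) :
    IntervalIntegrable (fun p => tan (p / 2) * sin (n * p)) volume a b :=
  (intervalIntegrable_const (c := 2 * (n : ℝ))).mono_fun'
    (measurable_tan_half.mul (by fun_prop)).aestronglyMeasurable
    (ae_of_all _ (abs_tan_half_mul_sin_nat_mul_le n))

lemma integral_cos_succ_mul (n : ℕ) : ∫ p in (0 : ℝ)..2 * π, cos ((n + 1) * p) = 0 := by
  have hn : (n + 1 : ℝ) ≠ 0 := by positivity
  have hsin : sin ((n + 1) * (2 * π)) = 0 := by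
    rw [← sin_nat_mul_pi (2 * (n + 1))]
    congr 1
    push_cast
    ring
  rw [intervalIntegral.integral_comp_mul_left _ hn, integral_cos, hsin]
  simp

lemma integral_tan_half_mul_sin_succ_mul_eq (n : ℕ) :
    ∫ p in (0 : ℝ)..2 * π, tan (p / 2) * sin ((n + 1) * p) =
      (∫ p in (0 : ℝ)..2 * π, cos (n * p)) -
        ∫ p in (0 : ℝ)..2 * π, tan (p / 2) * sin (n * p) := by
  have hcos (c : ℝ) : IntervalIntegrable (fun p => cos (c * p)) volume 0 (2 * π) :=
    Continuous.intervalIntegrable (by fun_prop) _ _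
  calc ∫ p in (0 : ℝ)..2 * π, tan (p / 2) * sin ((n + 1) * p)
      = ∫ p in (0 : ℝ)..2 * π,
          (cos (n * p) - cos ((n + 1) * p) - tan (p / 2) * sin (n * p)) := by
        refine intervalIntegral.integral_congr_ae ?_
        filter_upwards [ae_cos_half_ne_zero] with p hp _
        exact tan_half_mul_sin_succ_mul hp n
    _ = _ := by
        rw [intervalIntegral.integral_sub ((hcos _).sub (hcos _))
            (intervalIntegrable_tan_half_mul_sin_nat_mul n _ _),
          intervalIntegral.integral_sub (hcos _) (hcos _), integral_cos_succ_mul, sub_zero]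

lemma integral_tan_half_mul_sin_succ_mul (n : ℕ) :
    ∫ p in (0 : ℝ)..2 * π, tan (p / 2) * sin ((n + 1) * p) = 2 * π * (-1) ^ n := by
  induction n with
  | zero => rw [integral_tan_half_mul_sin_succ_mul_eq]; simp
  | succ n ih =>
    rw [integral_tan_half_mul_sin_succ_mul_eq]
    push_cast
    rw [ih, integral_cos_succ_mul, pow_succ]
    ring

end SineIntegrals

section SineSeries

variable {E : Type*} [NormedAddCommGroup E] [NormedSpace ℝ E] {b : ℕ → E}

lemma norm_sin_succ_mul_smul_le (k : ℕ) (p : ℝ) (v : E) :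
    ‖sin ((k + 1) * p) • v‖ ≤ (k + 1) * ‖v‖ := by
  rw [norm_smul]
  gcongr
  exact (abs_sin_le_one _).trans (by simp)

lemma norm_tan_half_smul_sin_succ_mul_smul_le (k : ℕ) (p : ℝ) (v : E) :
    ‖tan (p / 2) • sin ((k + 1) * p) • v‖ ≤ 2 * ((k + 1) * ‖v‖) := by
  rw [smul_smul, norm_smul, ← mul_assoc]
  gcongr
  exact_mod_cast abs_tan_half_mul_sin_nat_mul_le (k + 1) p

variable [CompleteSpace E]

lemma continuous_tsum_sin_succ_mul_smul (hb : Summable fun k : ℕ => (k + 1) * ‖b k‖) :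
    Continuous fun p : ℝ => ∑' k : ℕ, sin ((k + 1) * p) • b k :=
  continuous_tsum (fun k => by fun_prop) hb fun k p => norm_sin_succ_mul_smul_le k p (b k)

lemma hasSum_tan_half_smul_sin_succ_mul_smul (hb : Summable fun k : ℕ => (k + 1) * ‖b k‖)
    (p : ℝ) :
    HasSum (fun k : ℕ => tan (p / 2) • sin ((k + 1) * p) • b k)
      (tan (p / 2) • ∑' k : ℕ, sin ((k + 1) * p) • b k) :=
  (Summable.of_norm_bounded hb fun k => norm_sin_succ_mul_smul_le k p (b k)).hasSum.const_smul _

lemma intervalIntegrable_tan_half_smul_tsum (hb : Summable fun k : ℕ => (k + 1) * ‖b k‖)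
    (x y : ℝ) :
    IntervalIntegrable (fun p => tan (p / 2) • ∑' k : ℕ, sin ((k + 1) * p) • b k) volume x y := by
  refine (intervalIntegrable_const (c := ∑' k : ℕ, 2 * ((k + 1) * ‖b k‖))).mono_fun'
    (measurable_tan_half.aestronglyMeasurable.smul
      (continuous_tsum_sin_succ_mul_smul hb).aestronglyMeasurable) (ae_of_all _ fun p => ?_)
  dsimp only
  rw [← (hasSum_tan_half_smul_sin_succ_mul_smul hb p).tsum_eq]
  exact tsum_of_norm_bounded (hb.mul_left 2).hasSum fun k =>
    norm_tan_half_smul_sin_succ_mul_smul_le k p (b k)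

lemma integral_tan_half_smul_tsum (hb : Summable fun k : ℕ => (k + 1) * ‖b k‖) :
    ∫ p in (0 : ℝ)..2 * π, tan (p / 2) • ∑' k : ℕ, sin ((k + 1) * p) • b k =
      (2 * π) • ∑' k : ℕ, (-1 : ℝ) ^ k • b k := by
  have hmeas (k : ℕ) : AEStronglyMeasurable (fun p : ℝ => tan (p / 2) • sin ((k + 1) * p) • b k)
      (volume.restrict (uIoc 0 (2 * π))) :=
    measurable_tan_half.aestronglyMeasurable.smul
      (Continuous.aestronglyMeasurable (by fun_prop))
  have h := intervalIntegral.hasSum_integral_of_dominated_convergence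
    (fun k _ => 2 * ((k + 1) * ‖b k‖)) hmeas
    (fun k => ae_of_all _ fun p _ => norm_tan_half_smul_sin_succ_mul_smul_le k p (b k))
    (ae_of_all _ fun _ _ => hb.mul_left 2) intervalIntegrable_const
    (ae_of_all _ fun p _ => hasSum_tan_half_smul_sin_succ_mul_smul hb p)
  rw [← h.tsum_eq, ← tsum_const_smul'']
  refine tsum_congr fun k => ?_
  simp_rw [smul_smul]
  rw [intervalIntegral.integral_smul_const, integral_tan_half_mul_sin_succ_mul]

end SineSeries

section Truncation

/-- The domain of the truncated integrals whose limit as `δ → 0⁺` is the principal value: the real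
line with the open intervals of radius `δ` around the poles `(2m+1)π` of `tan (p/2)` removed. -/
def awayFromPoles (δ : ℝ) : Set ℝ := {p | ∀ m : ℤ, δ ≤ |p - (2 * (m : ℝ) + 1) * π|}

lemma measurableSet_awayFromPoles (δ : ℝ) : MeasurableSet (awayFromPoles δ) := by
  rw [awayFromPoles, ofPred_forall]
  exact .iInter fun m => measurableSet_le measurable_const (by fun_prop)

lemma periodic_mem_awayFromPoles (δ : ℝ) : Periodic (· ∈ awayFromPoles δ) (2 * π) := by
  refine fun p => propext ((Equiv.subRight (1 : ℤ)).forall_congr fun m => ?_)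
  have hshift : p + 2 * π - (2 * (m : ℝ) + 1) * π = p - (2 * ((m - 1 : ℤ) : ℝ) + 1) * π := by
    push_cast; ring
  rw [hshift, Equiv.subRight_apply]

lemma abs_cos_half_eq_abs_sin (p : ℝ) (m : ℤ) :
    |cos (p / 2)| = |sin ((p - (2 * m + 1) * π) / 2)| := by
  have hp : p / 2 = (p - (2 * m + 1) * π) / 2 + π / 2 + m * π := by ring
  conv_lhs => rw [hp, cos_add_int_mul_pi, cos_add_pi_div_two, abs_mul, abs_neg_one_zpow, one_mul,
    abs_neg]

lemma mem_awayFromPoles_of_le_two_mul_abs_cos {δ p : ℝ} (h : δ ≤ 2 * |cos (p / 2)|) :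
    p ∈ awayFromPoles δ := fun m => by
  have hsin := abs_sin_le_abs (x := (p - (2 * m + 1) * π) / 2)
  rw [← abs_cos_half_eq_abs_sin, abs_div, abs_two] at hsin
  linarith

lemma le_pi_mul_abs_cos_of_mem_awayFromPoles {δ p : ℝ} (hp : p ∈ awayFromPoles δ) :
    δ ≤ π * |cos (p / 2)| := by
  -- the index of the nearest pole
  set m : ℤ := round ((p - π) / (2 * π))
  have hr : p - (2 * m + 1) * π = 2 * π * ((p - π) / (2 * π) - m) := by field_simp; ring
  have hrle : |(p - (2 * m + 1) * π) / 2| ≤ π / 2 := by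
    rw [hr, mul_assoc, mul_div_cancel_left₀ _ two_ne_zero, abs_mul, abs_of_pos pi_pos]
    have := mul_le_mul_of_nonneg_left (abs_sub_round ((p - π) / (2 * π))) pi_pos.le
    linarith
  calc δ ≤ |p - (2 * m + 1) * π| := hp m
    _ = π * (2 / π * |(p - (2 * m + 1) * π) / 2|) := by
      rw [abs_div, abs_two]; field_simp
    _ ≤ π * |cos (p / 2)| := by
      rw [abs_cos_half_eq_abs_sin p m]
      gcongr
      exact mul_abs_le_abs_sin hrle

lemma ae_eventually_mem_awayFromPoles : ∀ᵐ p, ∀ᶠ δ in 𝓝[>] (0 : ℝ), p ∈ awayFromPoles δ := by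
  filter_upwards [ae_cos_half_ne_zero] with p hp
  have hpos : 0 < 2 * |cos (p / 2)| := by positivity
  filter_upwards [Ioo_mem_nhdsGT hpos] with δ hδ
  exact mem_awayFromPoles_of_le_two_mul_abs_cos hδ.2.le

lemma abs_tan_half_le_of_mem_awayFromPoles {δ p : ℝ} (hδ : 0 < δ) (hp : p ∈ awayFromPoles δ) :
    |tan (p / 2)| ≤ π / δ := by
  have hcos := le_pi_mul_abs_cos_of_mem_awayFromPoles hp
  have hpos : 0 < |cos (p / 2)| := pos_of_mul_pos_right (hδ.trans_le hcos) pi_pos.le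
  rw [tan_eq_sin_div_cos, abs_div, div_le_div_iff₀ hpos hδ]
  calc |sin (p / 2)| * δ ≤ 1 * (π * |cos (p / 2)|) := by
        gcongr
        exact abs_sin_le_one _
    _ = π * |cos (p / 2)| := one_mul _

variable {E : Type*} [NormedAddCommGroup E] [NormedSpace ℝ E] {f : ℝ → E}

lemma integrableOn_tan_half_smul (hf : Integrable f) {δ : ℝ} (hδ : 0 < δ) :
    IntegrableOn (fun p => tan (p / 2) • f p) (awayFromPoles δ) :=
  hf.integrableOn.bdd_smul (π / δ) measurable_tan_half.aestronglyMeasurable <|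
    (ae_restrict_mem (measurableSet_awayFromPoles δ)).mono fun _ hp =>
      abs_tan_half_le_of_mem_awayFromPoles hδ hp

theorem tendsto_setIntegral_tan_half_smul [CompleteSpace E] {b : ℕ → E} (hf : Integrable f)
    (hb : Summable fun k : ℕ => (k + 1) * ‖b k‖)
    (hfb : ∀ p, ∑' n : ℤ, f (p + n • (2 * π)) = ∑' k : ℕ, sin ((k + 1) * p) • b k) :
    Tendsto (fun δ => ∫ p in awayFromPoles δ, tan (p / 2) • f p) (𝓝[>] 0)
      (𝓝 ((2 * π) • ∑' k : ℕ, (-1 : ℝ) ^ k • b k)) := by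
  have hint := intervalIntegrable_tan_half_smul_tsum hb 0 (0 + 2 * π)
  simp only [← hfb] at hint
  have h := tendsto_setIntegral_periodic_smul measurableSet_awayFromPoles
    periodic_mem_awayFromPoles ae_eventually_mem_awayFromPoles periodic_tan_half
    (eventually_mem_nhdsWithin.mono fun _ hδ => integrableOn_tan_half_smul hf hδ)
    two_pi_pos 0 hint
  simpa only [hfb, zero_add, integral_tan_half_smul_tsum hb] using h

end Truncation

section Gaussian

open HurwitzZeta

variable {t : ℝ}

lemma summable_succ_pow_mul_exp_neg_sq (ht : 0 < t) (j : ℕ) :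
    Summable fun k : ℕ => ((k : ℝ) + 1) ^ j * exp (-((k : ℝ) + 1) ^ 2 / (4 * t)) := by
  refine (HurwitzKernelBounds.summable_f_nat j 1 (t := 1 / (4 * π * t)) (by positivity)).congr
    fun k => ?_
  rw [HurwitzKernelBounds.f_nat]
  congr 2
  field_simp

lemma two_pi_mul_two_div_rpow (ht : 0 < t) :
    2 * π * (2 / (4 * π * t) ^ (3 / 2 : ℝ)) =
      (4 * π) ^ (-(1 : ℝ) / 2) * t ^ (-(3 : ℝ) / 2) := by
  have hπ : 0 < 4 * π := by positivity
  have hpow : (4 * π) ^ (-(1 : ℝ) / 2) = 4 * π * (4 * π) ^ (-(3 : ℝ) / 2) := by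
    rw [show -(1 : ℝ) / 2 = 1 + -(3 : ℝ) / 2 by norm_num, rpow_add hπ, rpow_one]
  rw [hpow, mul_rpow hπ.le ht.le, neg_div, rpow_neg hπ.le, rpow_neg ht.le]
  ring

lemma hasSum_int_mul_exp_neg_mul_sq_oddKernel (ht : 0 < t) (p : ℝ) :
    HasSum (fun n : ℤ => (p + n • (2 * π)) * exp (-t * (p + n • (2 * π)) ^ 2))
      (2 * π * oddKernel ((p / (2 * π) : ℝ) : UnitAddCircle) (4 * π * t)) := by
  refine ((hasSum_int_oddKernel (p / (2 * π)) (x := 4 * π * t) (by positivity)).mul_left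
    (2 * π)).congr_fun fun n => ?_
  have hn : p + n • (2 * π) = 2 * π * (n + p / (2 * π)) := by
    rw [zsmul_eq_mul]; field_simp; ring
  rw [hn, mul_assoc]
  congr 3
  ring

lemma hasSum_nat_sin_oddKernel (ht : 0 < t) (p : ℝ) :
    HasSum (fun k : ℕ => sin ((k + 1) * p) * ((4 * π) ^ (-(1 : ℝ) / 2) * t ^ (-(3 : ℝ) / 2) *
        (((k : ℝ) + 1) * exp (-((k : ℝ) + 1) ^ 2 / (4 * t)))))
      (2 * π * oddKernel ((p / (2 * π) : ℝ) : UnitAddCircle) (4 * π * t)) := by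
  have h := hasSum_nat_sinKernel (p / (2 * π)) (t := 1 / (4 * π * t)) (by positivity)
  rw [← hasSum_nat_add_iff' 1] at h
  simp only [Finset.sum_range_one, Nat.cast_zero, mul_zero, zero_mul, sub_zero] at h
  rw [oddKernel_functional_equation, ← mul_assoc]
  refine (h.mul_left _).congr_fun fun k => ?_
  have hsin : 2 * π * (p / (2 * π)) * ((k + 1 : ℕ) : ℝ) = (k + 1) * p := by
    push_cast; field_simp
  have hexp : -π * ((k + 1 : ℕ) : ℝ) ^ 2 * (1 / (4 * π * t)) = -((k : ℝ) + 1) ^ 2 / (4 * t) := by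
    push_cast; field_simp
  rw [← two_pi_mul_two_div_rpow ht, hsin, hexp]
  push_cast
  ring

lemma tsum_int_mul_exp_neg_mul_sq_eq_tsum_nat_sin (ht : 0 < t) (p : ℝ) :
    ∑' n : ℤ, (p + n • (2 * π)) * exp (-t * (p + n • (2 * π)) ^ 2) =
      ∑' k : ℕ, sin ((k + 1) * p) * ((4 * π) ^ (-(1 : ℝ) / 2) * t ^ (-(3 : ℝ) / 2) *
        (((k : ℝ) + 1) * exp (-((k : ℝ) + 1) ^ 2 / (4 * t)))) :=
  (hasSum_int_mul_exp_neg_mul_sq_oddKernel ht p).tsum_eq.trans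
    (hasSum_nat_sin_oddKernel ht p).tsum_eq.symm

end Gaussian

end TanPrincipalValue

/-- The principal value integral
`(1/2π) p.v. ∫_ℝ p tan(p/2) e^{−tp²} dp = (4π)^{−1/2} t^{−3/2} Σ_{k≥1} (−1)^{k+1} k e^{−k²/4t}`,
the principal value being the limit, as `δ → 0⁺`, of the integral over `ℝ` with the open
intervals of radius `δ` around the singular points `(2m+1)π`, `m ∈ ℤ`, removed; the series
on the right converges absolutely. -/
theorem pv_tan_integral (t : ℝ) (ht : 0 < t) :
    Summable (fun k : ℕ =>
      (-1 : ℝ) ^ k * ((k : ℝ) + 1) * Real.exp (-((k : ℝ) + 1) ^ 2 / (4 * t))) ∧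
    Tendsto
      (fun δ : ℝ => (1 / (2 * Real.pi)) *
        ∫ p in {p : ℝ | ∀ m : ℤ, δ ≤ |p - (2 * (m : ℝ) + 1) * Real.pi|},
          p * Real.tan (p / 2) * Real.exp (-t * p ^ 2))
      (𝓝[>] (0 : ℝ))
      (𝓝 ((4 * Real.pi) ^ (-(1 : ℝ) / 2) * t ^ (-(3 : ℝ) / 2) *
        ∑' k : ℕ,
          (-1 : ℝ) ^ k * ((k : ℝ) + 1) * Real.exp (-((k : ℝ) + 1) ^ 2 / (4 * t)))) := by
  have hsum := TanPrincipalValue.summable_succ_pow_mul_exp_neg_sq ht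
  constructor
  · refine (hsum 1).of_norm_bounded fun k => ?_
    simp [abs_of_pos (Nat.cast_add_one_pos (α := ℝ) k)]
  · set C : ℝ := (4 * Real.pi) ^ (-(1 : ℝ) / 2) * t ^ (-(3 : ℝ) / 2)
    have hb : Summable fun k : ℕ => ((k : ℝ) + 1) *
        ‖C * (((k : ℝ) + 1) * Real.exp (-((k : ℝ) + 1) ^ 2 / (4 * t)))‖ := by
      refine ((hsum 2).mul_left C).congr fun k => ?_
      rw [Real.norm_of_nonneg (by positivity)]
      ring
    have hlim := TanPrincipalValue.tendsto_setIntegral_tan_half_smul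
      (integrable_mul_exp_neg_mul_sq ht) hb
      (TanPrincipalValue.tsum_int_mul_exp_neg_mul_sq_eq_tsum_nat_sin ht)
    convert hlim.const_mul (1 / (2 * Real.pi)) using 2 with δ
    · simp only [TanPrincipalValue.awayFromPoles, smul_eq_mul, mul_left_comm, mul_assoc]
    · simp only [smul_eq_mul, mul_left_comm _ C, tsum_mul_left, mul_assoc]
      field_simp
end

section
/- For every t > 0, the principal value integral of p cot(p/2) e^{−t p²} over ℝ, with singularities at the nonzero multiples of 2π, satisfies the identity (1/(2π)) · p.v. ∫_ℝ p cot(p/2) exp(−t p²) dp = (4π)^{−1/2} t^{−3/2} Σ_{k=1}^{∞} k exp(−k²/(4t)), and the series on the right converges absolutely. (At p = 0 the integrand extends continuously with value 2.) -/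
open scoped Topology
open MeasureTheory Filter

/-!
After the substitution `p = 2πa` the singularities are the nonzero integers and the integrand is
`f a * cot (πa)` with `f a` a multiple of `a * exp (-πxa²)`, `x = 4πt`. Near `0` it is bounded, so
excising `0` as well does not change the principal value. Now both the domain and the cotangent are
`1`-periodic, and the integral unfolds to one over `[0, 1]` of `cot (πa)` times the periodization
`∑ₙ f (a + n)`. By Poisson summation (the functional equation of the odd theta kernel) the
periodization is a rapidly convergent series `∑ bₙ sin (2πna)`. As `cot (πa) sin (2πna)` is bounded
with integral `1`, the singularities have disappeared and the principal value is `∑ bₙ`.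
-/

section PrincipalValue

open Metric Set
open scoped Pointwise

theorem thickening_smul₀ {𝕜 V : Type*} [NormedField 𝕜] [SeminormedAddCommGroup V]
    [NormedSpace 𝕜 V] {c : 𝕜} (hc : c ≠ 0) (δ : ℝ) (S : Set V) :
    thickening δ (c • S) = c • thickening (δ / ‖c‖) S := by
  ext x
  obtain ⟨y, rfl⟩ : ∃ y, c • y = x := ⟨c⁻¹ • x, smul_inv_smul₀ hc x⟩
  simp only [smul_mem_smul_set_iff₀ hc, mem_thickening_iff, mem_smul_set, exists_exists_and_eq_and,
    dist_smul₀, lt_div_iff₀' (norm_pos_iff.mpr hc)]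

variable {X E : Type*} [PseudoMetricSpace X] [MeasurableSpace X] [NormedAddCommGroup E]
  [NormedSpace ℝ E] {F : X → E} {S : Set X} {μ : Measure X} {I : E}

theorem tendsto_measure_ball [OpensMeasurableSpace X] [IsLocallyFiniteMeasure μ] (c : X) :
    Tendsto (fun δ ↦ μ (ball c δ)) (𝓝[>] 0) (𝓝 (μ (closure {c}))) := by
  obtain ⟨s, hs, hμs⟩ := μ.finiteAt_nhds c
  obtain ⟨R, hR, hRs⟩ := Metric.mem_nhds_iff.mp hs
  have hfin : μ (thickening R {c}) ≠ ⊤ := by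
    rw [thickening_singleton]
    exact ((measure_mono hRs).trans_lt hμs).ne
  simpa only [thickening_singleton] using tendsto_measure_thickening ⟨R, hR, hfin⟩

theorem tendsto_setIntegral_inter_ball [OpensMeasurableSpace X] [IsLocallyFiniteMeasure μ] {c : X}
    (hμ : μ (closure {c}) = 0) (hF : IntegrableAtFilter F (𝓝 c) μ) (A : ℝ → Set X) :
    Tendsto (fun δ ↦ ∫ x in A δ ∩ ball c δ, F x ∂μ) (𝓝[>] 0) (𝓝 0) := by
  obtain ⟨s, hs, hFs⟩ := hF
  obtain ⟨r, hr, hrs⟩ := Metric.mem_nhds_iff.mp hs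
  have hle (δ : ℝ) : μ.restrict s (A δ ∩ ball c δ) ≤ μ (ball c δ) :=
    (Measure.restrict_le_self _).trans (measure_mono inter_subset_right)
  have hzero : Tendsto (fun δ ↦ μ.restrict s (A δ ∩ ball c δ)) (𝓝[>] 0) (𝓝 0) :=
    tendsto_of_tendsto_of_tendsto_of_le_of_le tendsto_const_nhds (hμ ▸ tendsto_measure_ball c)
      (fun _ ↦ zero_le) hle
  refine (Integrable.tendsto_setIntegral_nhds_zero hFs hzero).congr' ?_
  filter_upwards [Ioo_mem_nhdsGT hr] with δ hδ
  rw [Measure.restrict_restrict_of_subset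
    (inter_subset_right.trans ((ball_subset_ball hδ.2.le).trans hrs))]

/-- `I` is the principal value of the integral of `F` with singular set `S`: the limit as `δ → 0⁺`
of the integrals over the points at distance at least `δ` from `S`. Absolute convergence of the
truncated integrals is part of the notion. -/
structure HasPrincipalValue (F : X → E) (S : Set X) (μ : Measure X) (I : E) : Prop where
  integrableOn : ∀ δ > 0, IntegrableOn F (thickening δ S)ᶜ μ
  tendsto : Tendsto (fun δ ↦ ∫ x in (thickening δ S)ᶜ, F x ∂μ) (𝓝[>] 0) (𝓝 I)

namespace HasPrincipalValue

theorem of_integrable [OpensMeasurableSpace X] (hF : Integrable F μ) (hS : μ (closure S) = 0) :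
    HasPrincipalValue F S μ (∫ x, F x ∂μ) where
  integrableOn _ _ := hF.integrableOn
  tendsto := by
    have hmeas (δ : ℝ) : MeasurableSet (thickening δ S)ᶜ := isOpen_thickening.measurableSet.compl
    simp only [← integral_indicator (hmeas _)]
    refine tendsto_integral_filter_of_dominated_convergence (fun x ↦ ‖F x‖)
      (.of_forall fun δ ↦ hF.aestronglyMeasurable.indicator (hmeas δ))
      (.of_forall fun δ ↦ .of_forall fun x ↦ norm_indicator_le_norm_self F x) hF.norm ?_
    filter_upwards [measure_eq_zero_iff_ae_notMem.mp hS] with x hx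
    refine tendsto_const_nhds.congr' ?_
    filter_upwards [(eventually_notMem_thickening_of_infEDist_pos hx).filter_mono
      nhdsWithin_le_nhds] with δ hδ
    exact (indicator_of_mem (mem_compl hδ) F).symm

theorem of_insert [OpensMeasurableSpace X] [IsLocallyFiniteMeasure μ] {c : X}
    (hμ : μ (closure {c}) = 0) (h : HasPrincipalValue F (insert c S) μ I)
    (hc : IntegrableAtFilter F (𝓝 c) μ) : HasPrincipalValue F S μ I := by
  have thickening_insert (δ : ℝ) : (thickening δ S)ᶜ \ ball c δ = (thickening δ (insert c S))ᶜ := by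
    rw [insert_eq, thickening_union, thickening_singleton, compl_union, sdiff_eq, inter_comm]
  obtain ⟨s, hs, hFs⟩ := hc
  obtain ⟨r, hr, hrs⟩ := Metric.mem_nhds_iff.mp hs
  have integrableOn (δ : ℝ) (hδ : 0 < δ) : IntegrableOn F (thickening δ S)ᶜ μ := by
    refine ((h.integrableOn (min δ r) (lt_min hδ hr)).union (hFs.mono_set hrs)).mono_set
      fun x hx ↦ ?_
    rw [← thickening_insert]
    by_cases hxr : x ∈ ball c r
    · exact .inr hxr
    · exact .inl ⟨fun hxS ↦ hx (thickening_mono (min_le_left _ _) S hxS),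
        fun hxc ↦ hxr (ball_subset_ball (min_le_right _ _) hxc)⟩
  refine ⟨integrableOn, ?_⟩
  rw [← zero_add I]
  refine ((tendsto_setIntegral_inter_ball hμ ⟨s, hs, hFs⟩ fun δ ↦ (thickening δ S)ᶜ).add
    h.tendsto).congr' ?_
  filter_upwards [self_mem_nhdsWithin] with δ hδ
  rw [← thickening_insert, integral_inter_add_sdiff measurableSet_ball (integrableOn δ hδ)]

theorem const_smul {𝕜 : Type*} [NormedField 𝕜] [NormedSpace 𝕜 E] [SMulCommClass ℝ 𝕜 E]
    (h : HasPrincipalValue F S μ I) (c : 𝕜) : HasPrincipalValue (c • F) S μ (c • I) where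
  integrableOn δ hδ := (h.integrableOn δ hδ).smul c
  tendsto := by simpa only [Pi.smul_apply, integral_smul] using h.tendsto.const_smul c

theorem of_comp_smul {V : Type*} [NormedAddCommGroup V] [NormedSpace ℝ V] [FiniteDimensional ℝ V]
    [MeasurableSpace V] [BorelSpace V] {ν : Measure V} [ν.IsAddHaarMeasure] {F : V → E} {S : Set V}
    {c : ℝ} (hc : 0 < c) (h : HasPrincipalValue (fun x ↦ F (c • x)) S ν I) :
    HasPrincipalValue F (c • S) ν (c ^ Module.finrank ℝ V • I) := by
  have compl_thickening_smul (δ : ℝ) : (thickening δ (c • S))ᶜ = c • (thickening (δ / c) S)ᶜ := by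
    rw [thickening_smul₀ hc.ne', Real.norm_of_nonneg hc.le, compl_eq_univ_sdiff,
      compl_eq_univ_sdiff, smul_set_sdiff₀ hc.ne', smul_set_univ₀ hc.ne']
  refine ⟨fun δ hδ ↦ ?_, ?_⟩
  · have hmeas (ε : ℝ) (T : Set V) : MeasurableSet (thickening ε T)ᶜ :=
      isOpen_thickening.measurableSet.compl
    have hF := h.integrableOn (δ / c) (div_pos hδ hc)
    rw [← integrable_indicator_iff (hmeas _ _)] at hF ⊢
    rw [← integrable_comp_smul_iff ν _ hc.ne', compl_thickening_smul]
    refine hF.congr (.of_forall fun x ↦ ?_)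
    classical
    simp only [indicator_apply, smul_mem_smul_set_iff₀ hc.ne']
  · have tendsto_div : Tendsto (· / c) (𝓝[>] 0) (𝓝[>] 0) :=
      tendsto_nhdsWithin_of_tendsto_nhds_of_eventually_within _
        (((continuous_id.div_const c).tendsto' 0 0 (zero_div c)).mono_left nhdsWithin_le_nhds)
        (eventually_mem_nhdsWithin.mono fun _ hδ ↦ div_pos hδ hc)
    refine ((h.tendsto.comp tendsto_div).const_smul (c ^ Module.finrank ℝ V)).congr fun δ ↦ ?_
    rw [compl_thickening_smul, Function.comp_apply, Measure.setIntegral_comp_smul_of_pos _ _ _ hc,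
      smul_inv_smul₀ (pow_pos hc _).ne']

end HasPrincipalValue

end PrincipalValue

section Cotangent

open Real Set

theorem abs_sin_nat_mul_le (n : ℕ) (y : ℝ) : |sin (n * y)| ≤ n * |sin y| := by
  induction n with
  | zero => simp
  | succ n ih =>
    rw [Nat.cast_succ, add_one_mul, add_one_mul, sin_add]
    calc |sin (n * y) * cos y + cos (n * y) * sin y|
        ≤ |sin (n * y)| * |cos y| + |cos (n * y)| * |sin y| := by
          simpa only [abs_mul] using abs_add_le (sin (n * y) * cos y) (cos (n * y) * sin y)
      _ ≤ |sin (n * y)| * 1 + 1 * |sin y| := by gcongr <;> exact abs_cos_le_one _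
      _ ≤ n * |sin y| + |sin y| := by linarith

theorem abs_cot_mul_sin_nat_mul_le (n : ℕ) (y : ℝ) : |cot y * sin (n * y)| ≤ n := by
  rw [cot_eq_cos_div_sin]
  rcases eq_or_ne (sin y) 0 with h | h
  · simp [h]
  · rw [div_mul_eq_mul_div, abs_div, abs_mul, div_le_iff₀ (abs_pos.mpr h)]
    calc |cos y| * |sin (n * y)| ≤ 1 * (n * |sin y|) := by
          gcongr
          exacts [abs_cos_le_one y, abs_sin_nat_mul_le n y]
      _ = n * |sin y| := one_mul _

theorem abs_cot_pi_mul_sin_le (n : ℕ) (a : ℝ) :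
    |cot (π * a) * sin (2 * π * a * n)| ≤ 2 * n := by
  have h := abs_cot_mul_sin_nat_mul_le (2 * n) (π * a)
  rwa [Nat.cast_mul, Nat.cast_ofNat, show 2 * (n : ℝ) * (π * a) = 2 * π * a * n by ring] at h

theorem periodic_cot_pi_mul : Function.Periodic (fun a ↦ cot (π * a)) 1 := fun a ↦ by
  simp only [mul_add_one]
  rw [cot_eq_cos_div_sin, cot_eq_cos_div_sin, cos_add_pi, sin_add_pi, neg_div_neg_eq]

theorem two_mul_abs_sub_round_le_abs_sin_pi_mul (a : ℝ) : 2 * |a - round a| ≤ |sin (π * a)| := by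
  have hle : |π * (a - round a)| ≤ π / 2 := by
    rw [abs_mul, abs_of_pos pi_pos]
    nlinarith [abs_sub_round a, pi_pos]
  calc 2 * |a - round a| = 2 / π * |π * (a - round a)| := by
        rw [abs_mul, abs_of_pos pi_pos]
        field_simp
    _ ≤ |sin (π * (a - round a))| := mul_abs_le_abs_sin hle
    _ = |sin (π * a)| := by
        rw [mul_sub, mul_comm π (round a : ℝ), sin_sub_int_mul_pi, abs_mul, abs_zpow, abs_neg,
          abs_one, one_zpow, one_mul]

theorem abs_cot_pi_mul_le (a : ℝ) : |cot (π * a)| ≤ (2 * |a - round a|)⁻¹ := by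
  rcases eq_or_ne a (round a) with h | h
  · -- At the integers both sides are `0`, by the convention `x / 0 = 0`.
    have hcot : cot (π * a) = 0 := by
      rw [cot_eq_cos_div_sin, h, mul_comm, sin_int_mul_pi, div_zero]
    rw [hcot, abs_zero]
    positivity
  · have hpos : 0 < |a - round a| := abs_pos.mpr (sub_ne_zero.mpr h)
    rw [cot_eq_cos_div_sin, abs_div, inv_eq_one_div]
    exact div_le_div₀ zero_le_one (abs_cos_le_one _) (mul_pos two_pos hpos)
      (two_mul_abs_sub_round_le_abs_sin_pi_mul a)

theorem measurable_cot : Measurable cot := by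
  simp only [funext cot_eq_cos_div_sin]
  fun_prop

theorem isBigO_cot_pi_mul : (fun a ↦ cot (π * a)) =O[𝓝 0] fun a ↦ a⁻¹ := by
  refine Asymptotics.IsBigO.of_bound 2⁻¹ ?_
  filter_upwards [Ioo_mem_nhds (show -(1 / 2 : ℝ) < 0 by norm_num) one_half_pos] with a ha
  simpa [round_eq_zero_iff.mpr (Ioo_subset_Ico_self ha), mul_comm] using abs_cot_pi_mul_le a

theorem integral_cos_two_pi_mul_nat {n : ℕ} (hn : n ≠ 0) :
    ∫ a in (0 : ℝ)..1, cos (2 * π * a * n) = 0 := by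
  have hn' : 2 * π * n ≠ 0 := by positivity
  simp only [mul_right_comm (2 * π) _ (n : ℝ)]
  rw [intervalIntegral.integral_comp_mul_left cos hn', integral_cos, mul_zero, sin_zero, sub_zero,
    show 2 * π * n * 1 = (2 * n : ℕ) * π by push_cast; ring, sin_nat_mul_pi, smul_zero]

theorem cot_mul_sin_add_sub_sin_sub {y : ℝ} (hy : sin y ≠ 0) (z : ℝ) :
    cot y * (sin (z + y) - sin (z - y)) = cos (z + y) + cos (z - y) := by
  rw [cot_eq_cos_div_sin, sin_add, sin_sub, cos_add, cos_sub]
  field_simp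
  ring

theorem intervalIntegrable_cot_pi_mul_sin (n : ℕ) :
    IntervalIntegrable (fun a ↦ cot (π * a) * sin (2 * π * a * n)) volume 0 1 := by
  have := measurable_cot
  refine (intervalIntegrable_const (c := (2 * n : ℝ))).mono_fun
    (Measurable.aestronglyMeasurable (by fun_prop)) (.of_forall fun a ↦ ?_)
  simpa [abs_mul] using abs_cot_pi_mul_sin_le n a

theorem integral_cot_pi_mul_sin {n : ℕ} (hn : n ≠ 0) :
    ∫ a in (0 : ℝ)..1, cot (π * a) * sin (2 * π * a * n) = 1 := by
  have integral_succ (k : ℕ) :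
      (∫ a in (0 : ℝ)..1, cot (π * a) * sin (2 * π * a * (k + 1 : ℕ))) -
          ∫ a in (0 : ℝ)..1, cot (π * a) * sin (2 * π * a * k) =
        (∫ a in (0 : ℝ)..1, cos (2 * π * a * (k + 1 : ℕ))) +
          ∫ a in (0 : ℝ)..1, cos (2 * π * a * k) := by
    rw [← intervalIntegral.integral_sub (intervalIntegrable_cot_pi_mul_sin _)
      (intervalIntegrable_cot_pi_mul_sin _), ← intervalIntegral.integral_add
      (Continuous.intervalIntegrable (by fun_prop) _ _)
      (Continuous.intervalIntegrable (by fun_prop) _ _)]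
    refine intervalIntegral.integral_congr_Ioo_of_le zero_le_one fun a ha ↦ ?_
    have hsin : sin (π * a) ≠ 0 :=
      (sin_pos_of_pos_of_lt_pi (mul_pos pi_pos ha.1) (mul_lt_of_lt_one_right pi_pos ha.2)).ne'
    have h := cot_mul_sin_add_sub_sin_sub hsin (2 * π * a * k + π * a)
    rw [add_sub_cancel_right, show 2 * π * a * k + π * a + π * a = 2 * π * a * (k + 1 : ℕ) by
      push_cast; ring] at h
    simpa only [mul_sub] using h
  induction n, Nat.one_le_iff_ne_zero.mpr hn using Nat.le_induction with
  | base =>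
    have h := integral_succ 0
    rw [zero_add, integral_cos_two_pi_mul_nat one_ne_zero] at h
    simpa using h
  | succ k hk ih =>
    have h := integral_succ k
    rw [ih (by omega), integral_cos_two_pi_mul_nat k.succ_ne_zero,
      integral_cos_two_pi_mul_nat (by omega)] at h
    linarith

end Cotangent

section Unfolding

open Set Metric

theorem integral_eq_integral_tsum_add_int {E : Type*} [NormedAddCommGroup E] [NormedSpace ℝ E]
    {f : ℝ → E} (hf : Integrable f) : ∫ a, f a = ∫ a in Ioc (0 : ℝ) 1, ∑' n : ℤ, f (a + n) := by
  rw [← hf.hasSum_intervalIntegral_comp_add_int.tsum_eq]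
  simp only [intervalIntegral.integral_of_le zero_le_one]
  refine integral_tsum_of_summable_integral_norm
    (fun n ↦ (hf.comp_add_right (n : ℝ)).integrableOn) ?_
  simpa only [intervalIntegral.integral_of_le zero_le_one]
    using hf.norm.hasSum_intervalIntegral_comp_add_int.summable

theorem setIntegral_mul_eq_of_periodic {f g : ℝ → ℝ} {D : Set ℝ} (hD : MeasurableSet D)
    (hDper : Function.Periodic (· ∈ D) 1) (hg : Function.Periodic g 1)
    (hfg : IntegrableOn (fun a ↦ f a * g a) D) :
    ∫ a in D, f a * g a =
      ∫ a in D, (∑' n : ℤ, f (a + n)) * g a ∂(volume.restrict (Ioc 0 1)) := by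
  rw [← integral_indicator hD, ← integral_indicator hD,
    integral_eq_integral_tsum_add_int ((integrable_indicator_iff hD).mpr hfg)]
  congr with a
  have hD_int (n : ℤ) : a + n ∈ D ↔ a ∈ D := by simpa using hDper.int_mul n a
  have hg_int (n : ℤ) : g (a + n) = g a := by simpa using hg.int_mul n a
  by_cases ha : a ∈ D
  · simp only [indicator, hD_int, hg_int, ha, if_true, tsum_mul_right]
  · simp only [indicator, hD_int, ha, if_false, tsum_zero]

theorem periodic_mem_thickening_range_intCast (δ : ℝ) :
    Function.Periodic (· ∈ (thickening δ (range ((↑) : ℤ → ℝ)))ᶜ) 1 := fun a ↦ by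
  simp only [mem_compl_iff, mem_thickening_iff, exists_range_iff, eq_iff_iff, not_iff_not]
  refine (Equiv.subRight (1 : ℤ)).exists_congr fun n ↦ ?_
  rw [Equiv.subRight_apply, Int.cast_sub, Int.cast_one, ← dist_add_right a (n - 1 : ℝ) 1,
    sub_add_cancel]

theorem le_abs_sub_round_of_notMem_thickening {δ a : ℝ}
    (ha : a ∉ thickening δ (range ((↑) : ℤ → ℝ))) : δ ≤ |a - round a| := by
  contrapose! ha
  exact mem_thickening_iff.mpr ⟨round a, mem_range_self _, ha⟩

end Unfolding

section Series

open Real Set Metric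

variable {f : ℝ → ℝ} {b : ℕ → ℝ}

theorem integrableOn_mul_cot_pi (hf : Integrable f) {δ : ℝ} (hδ : 0 < δ) :
    IntegrableOn (fun a ↦ f a * cot (π * a)) (thickening δ (range ((↑) : ℤ → ℝ)))ᶜ := by
  refine hf.integrableOn.mul_bdd (c := (2 * δ)⁻¹)
    (measurable_cot.comp (measurable_const_mul π)).aestronglyMeasurable ?_
  filter_upwards [ae_restrict_mem isOpen_thickening.measurableSet.compl] with a ha
  refine (abs_cot_pi_mul_le a).trans ?_
  gcongr
  exact le_abs_sub_round_of_notMem_thickening ha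

section SineSeries

variable {P : ℝ → ℝ} (hb : Summable fun n : ℕ ↦ |b n| * (2 * (n + 1 : ℕ)))
  (hP : ∀ a, HasSum (fun n : ℕ ↦ b n * sin (2 * π * a * (n + 1 : ℕ))) (P a))

include hP

theorem hasSum_cot_mul_sineSeries (a : ℝ) : HasSum
    (fun n : ℕ ↦ b n * (cot (π * a) * sin (2 * π * a * (n + 1 : ℕ)))) (P a * cot (π * a)) := by
  simpa only [mul_assoc, mul_comm (cot (π * a))] using (hP a).mul_right (cot (π * a))

include hb

theorem integrableOn_sineSeries_mul_cot_pi :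
    IntegrableOn (fun a ↦ P a * cot (π * a)) (Ioc 0 1) := by
  have hterm := hasSum_cot_mul_sineSeries hP
  have := measurable_cot
  have hmeas : Measurable fun a ↦ P a * cot (π * a) := by
    simp only [← (hterm _).tsum_eq]
    exact Measurable.tsum fun n ↦ by fun_prop
  refine Measure.integrableOn_of_bounded measure_Ioc_lt_top.ne hmeas.aestronglyMeasurable
    (.of_forall fun a ↦ (hterm a).norm_le_of_bounded hb.hasSum fun n ↦ ?_)
  rw [norm_mul]
  exact mul_le_mul_of_nonneg_left (abs_cot_pi_mul_sin_le (n + 1) a) (norm_nonneg (b n))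

theorem integral_sineSeries_mul_cot_pi :
    ∫ a in Ioc 0 1, P a * cot (π * a) = ∑' n, b n := by
  have := measurable_cot
  have h := hasSum_integral_of_dominated_convergence (μ := volume.restrict (Ioc (0 : ℝ) 1))
    (fun n _ ↦ |b n| * (2 * (n + 1 : ℕ))) (fun n ↦ by fun_prop)
    (fun n ↦ .of_forall fun a ↦ ?_) (.of_forall fun _ ↦ hb) (integrable_const _)
    (.of_forall (hasSum_cot_mul_sineSeries hP))
  · simp only [← intervalIntegral.integral_of_le zero_le_one, intervalIntegral.integral_const_mul,
      integral_cot_pi_mul_sin (Nat.succ_ne_zero _), mul_one] at h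
    rw [← intervalIntegral.integral_of_le zero_le_one, h.tsum_eq]
  · rw [norm_mul]
    exact mul_le_mul_of_nonneg_left (abs_cot_pi_mul_sin_le (n + 1) a) (norm_nonneg (b n))

end SineSeries

variable (hf : Integrable f) (hb : Summable fun n : ℕ ↦ |b n| * (2 * (n + 1 : ℕ)))
  (hfb : ∀ a, HasSum (fun n : ℕ ↦ b n * sin (2 * π * a * (n + 1 : ℕ))) (∑' n : ℤ, f (a + n)))

include hf hb hfb

theorem hasPrincipalValue_mul_cot_pi_range_intCast :
    HasPrincipalValue (fun a ↦ f a * cot (π * a)) (range ((↑) : ℤ → ℝ)) volume (∑' n, b n) := by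
  refine ⟨fun δ hδ ↦ integrableOn_mul_cot_pi hf hδ, ?_⟩
  have hnull : volume.restrict (Ioc 0 1) (closure (range ((↑) : ℤ → ℝ))) = 0 := by
    rw [isClosed_range_intCast.closure_eq]
    exact (countable_range _).measure_zero _
  have hpv := HasPrincipalValue.of_integrable (integrableOn_sineSeries_mul_cot_pi hb hfb) hnull
  rw [← integral_sineSeries_mul_cot_pi hb hfb]
  refine hpv.tendsto.congr' ?_
  filter_upwards [self_mem_nhdsWithin] with δ hδ
  exact (setIntegral_mul_eq_of_periodic isOpen_thickening.measurableSet.compl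
    (periodic_mem_thickening_range_intCast δ) periodic_cot_pi_mul
    (integrableOn_mul_cot_pi hf hδ)).symm

theorem hasPrincipalValue_mul_cot_pi (hf0 : f =O[𝓝 0] fun a ↦ a) :
    HasPrincipalValue (fun a ↦ f a * cot (π * a)) ((↑) '' ({0}ᶜ : Set ℤ)) volume (∑' n, b n) := by
  have hinsert : insert (0 : ℝ) ((↑) '' ({0}ᶜ : Set ℤ)) = range ((↑) : ℤ → ℝ) := by
    rw [← Int.cast_zero, ← image_insert_eq, insert_eq, union_compl_self, image_univ]
  have hbdd : (fun a ↦ f a * cot (π * a)) =O[𝓝 0] fun _ ↦ (1 : ℝ) := by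
    refine (hf0.mul isBigO_cot_pi_mul).trans (.of_bound 1 (.of_forall fun a ↦ ?_))
    simpa using mul_inv_le_one (a := |a|)
  refine HasPrincipalValue.of_insert (c := 0) (by simp) ?_ (hbdd.integrableAtFilter ?_ ?_)
  · rw [hinsert]
    exact hasPrincipalValue_mul_cot_pi_range_intCast hf hb hfb
  · have hcot : Measurable fun a ↦ cot (π * a) := measurable_cot.comp (measurable_const_mul π)
    exact (hf.aestronglyMeasurable.mul hcot.aestronglyMeasurable).stronglyMeasurableAtFilter
  · exact locallyIntegrable_const (1 : ℝ) 0

end Series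

section Gaussian

open Real Set Metric
open scoped Pointwise

theorem summable_pow_mul_exp_neg_pi_mul_sq (k : ℕ) {T : ℝ} (hT : 0 < T) :
    Summable fun n : ℕ ↦ (n : ℝ) ^ k * exp (-π * n ^ 2 * T) :=
  ((summable_pow_mul_jacobiTheta₂_term_bound 0 hT k).comp_injective Nat.cast_injective).congr
    fun n ↦ by simp [mul_comm, mul_left_comm]

theorem hasSum_sin_tsum_add_int_mul_exp {x : ℝ} (hx : 0 < x) (a : ℝ) :
    HasSum (fun n : ℕ ↦ 2 / x ^ (3 / 2 : ℝ) *
        ((n + 1 : ℕ) * exp (-π * (n + 1 : ℕ) ^ 2 * (1 / x))) * sin (2 * π * a * (n + 1 : ℕ)))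
      (∑' n : ℤ, (a + n) * exp (-π * (a + n) ^ 2 * x)) := by
  have hodd := (HurwitzZeta.hasSum_int_oddKernel a hx).tsum_eq
  rw [HurwitzZeta.oddKernel_functional_equation] at hodd
  simp only [add_comm a, hodd]
  have h := ((hasSum_nat_add_iff' 1).mpr
    (HurwitzZeta.hasSum_nat_sinKernel a (one_div_pos.mpr hx))).mul_left (1 / x ^ (3 / 2 : ℝ))
  simp only [Finset.range_one, Finset.sum_singleton, Nat.cast_zero, mul_zero, zero_mul, sub_zero]
    at h
  exact h.congr_fun fun n ↦ by ring

theorem isBigO_mul_exp_neg_mul_sq (x : ℝ) :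
    (fun a ↦ a * exp (-π * a ^ 2 * x)) =O[𝓝 0] fun a ↦ a := by
  have hexp : (fun a ↦ exp (-π * a ^ 2 * x)) =O[𝓝 0] fun _ ↦ (1 : ℝ) :=
    (show Continuous fun a ↦ exp (-π * a ^ 2 * x) by fun_prop).continuousAt.isBigO_one ℝ
  simpa only [mul_one] using (Asymptotics.isBigO_refl (fun a : ℝ ↦ a) (𝓝 0)).mul hexp

theorem hasPrincipalValue_mul_exp_mul_cot_pi {x : ℝ} (hx : 0 < x) :
    HasPrincipalValue (fun a ↦ a * exp (-π * a ^ 2 * x) * cot (π * a)) ((↑) '' ({0}ᶜ : Set ℤ))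
      volume (2 / x ^ (3 / 2 : ℝ) *
        ∑' n : ℕ, (n + 1 : ℕ) * exp (-π * (n + 1 : ℕ) ^ 2 * (1 / x))) := by
  rw [← tsum_mul_left]
  refine hasPrincipalValue_mul_cot_pi ?_ ?_ (hasSum_sin_tsum_add_int_mul_exp hx)
    (isBigO_mul_exp_neg_mul_sq x)
  · exact (integrable_mul_exp_neg_mul_sq (mul_pos pi_pos hx)).congr (.of_forall fun a ↦ by ring_nf)
  · refine (((summable_nat_add_iff 1).mpr (summable_pow_mul_exp_neg_pi_mul_sq 2
      (one_div_pos.mpr hx))).mul_left (4 / x ^ (3 / 2 : ℝ))).congr fun n ↦ ?_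
    rw [abs_of_nonneg (by positivity)]
    ring

theorem exp_neg_pi_mul_sq_mul_one_div (t y : ℝ) :
    exp (-π * y ^ 2 * (1 / (4 * π * t))) = exp (-y ^ 2 / (4 * t)) := by
  field_simp

theorem two_pi_mul_two_div_rpow {t : ℝ} (ht : 0 < t) :
    2 * π * (2 / (4 * π * t) ^ (3 / 2 : ℝ)) =
      (4 * π) ^ (-(1 : ℝ) / 2) * t ^ (-(3 : ℝ) / 2) := by
  have h4π : 0 < 4 * π := by positivity
  rw [mul_rpow h4π.le ht.le, neg_div, neg_div, rpow_neg ht.le,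
    show -(1 / 2 : ℝ) = 1 - 3 / 2 by norm_num, rpow_sub h4π, rpow_one]
  field_simp
  norm_num

theorem summable_mul_exp_neg_sq_div {t : ℝ} (ht : 0 < t) :
    Summable fun n : ℕ ↦ ((n : ℝ) + 1) * exp (-((n : ℝ) + 1) ^ 2 / (4 * t)) := by
  have hx : 0 < 4 * π * t := by positivity
  simpa only [exp_neg_pi_mul_sq_mul_one_div, pow_one, Nat.cast_add_one] using
    (summable_nat_add_iff 1).mpr (summable_pow_mul_exp_neg_pi_mul_sq 1 (one_div_pos.mpr hx))

theorem hasPrincipalValue_mul_cot_half_mul_exp {t : ℝ} (ht : 0 < t) :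
    HasPrincipalValue (fun p ↦ p * (cos (p / 2) / sin (p / 2)) * exp (-t * p ^ 2))
      ((2 * π) • ((↑) '' ({0}ᶜ : Set ℤ))) volume
      (2 * π * ((4 * π) ^ (-(1 : ℝ) / 2) * t ^ (-(3 : ℝ) / 2) *
        ∑' n : ℕ, ((n : ℝ) + 1) * exp (-((n : ℝ) + 1) ^ 2 / (4 * t)))) := by
  have hcomp : (fun a ↦ (2 * π) • a * (cos ((2 * π) • a / 2) / sin ((2 * π) • a / 2)) *
      exp (-t * ((2 * π) • a) ^ 2)) =
      (2 * π) • fun a ↦ a * exp (-π * a ^ 2 * (4 * π * t)) * cot (π * a) := by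
    funext a
    simp only [Pi.smul_apply, smul_eq_mul, cot_eq_cos_div_sin]
    ring_nf
  have h := (hasPrincipalValue_mul_exp_mul_cot_pi (x := 4 * π * t) (by positivity)).const_smul
    (2 * π)
  rw [← hcomp] at h
  have hpv := HasPrincipalValue.of_comp_smul
    (F := fun p ↦ p * (cos (p / 2) / sin (p / 2)) * exp (-t * p ^ 2)) two_pi_pos h
  simp only [Module.finrank_self, pow_one, smul_eq_mul, exp_neg_pi_mul_sq_mul_one_div,
    Nat.cast_add_one] at hpv
  rwa [← two_pi_mul_two_div_rpow ht, mul_assoc (2 * π) (2 / _)]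

theorem setOf_forall_le_abs_sub_two_pi_mul_eq (δ : ℝ) :
    {p : ℝ | ∀ m : ℤ, m ≠ 0 → δ ≤ |p - 2 * π * m|} =
      (thickening δ ((2 * π) • ((↑) '' ({0}ᶜ : Set ℤ))))ᶜ := by
  ext p
  simp [mem_thickening_iff, mem_smul_set, dist_eq]

end Gaussian

/-- The principal value integral
`(1/2π) p.v. ∫_ℝ p cot(p/2) e^{−tp²} dp = (4π)^{−1/2} t^{−3/2} Σ_{k≥1} k e^{−k²/4t}`,
the principal value being the limit, as `δ → 0⁺`, of the integral over `ℝ` with the open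
intervals of radius `δ` around the singular points `2πm`, `m ∈ ℤ \ {0}`, removed (at
`p = 0` the integrand has a removable singularity); the series on the right converges
absolutely. -/
theorem pv_cot_integral (t : ℝ) (ht : 0 < t) :
    Summable (fun k : ℕ =>
      ((k : ℝ) + 1) * Real.exp (-((k : ℝ) + 1) ^ 2 / (4 * t))) ∧
    Tendsto
      (fun δ : ℝ => (1 / (2 * Real.pi)) *
        ∫ p in {p : ℝ | ∀ m : ℤ, m ≠ 0 → δ ≤ |p - 2 * Real.pi * (m : ℝ)|},
          p * (Real.cos (p / 2) / Real.sin (p / 2)) * Real.exp (-t * p ^ 2))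
      (𝓝[>] (0 : ℝ))
      (𝓝 ((4 * Real.pi) ^ (-(1 : ℝ) / 2) * t ^ (-(3 : ℝ) / 2) *
        ∑' k : ℕ, ((k : ℝ) + 1) * Real.exp (-((k : ℝ) + 1) ^ 2 / (4 * t)))) := by
  refine ⟨summable_mul_exp_neg_sq_div ht, ?_⟩
  have h := (hasPrincipalValue_mul_cot_half_mul_exp ht).tendsto.const_mul (1 / (2 * Real.pi))
  rw [← mul_assoc, one_div_mul_cancel Real.two_pi_pos.ne', one_mul] at h
  simpa only [setOf_forall_le_abs_sub_two_pi_mul_eq] using h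
end
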